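/- arXiv:1810.05377 — 5 statements merged into one kernel-verified Lean document; each statement's English description precedes it below -/
import Mathlib

section
/- (Radin–Sadun) Let n ≥ 1 and let α₁, …, α_n be real numbers with each α_j/π rational. Let M = A₁·A₂·⋯·A_n be the 2×2 complex matrix where A_j = Z(α_j) when j is odd and A_j = X(α_j) when j is even. If there exists a nonzero complex number λ with M = λ·I (I the 2×2 identity matrix), then either there exists j ∈ {1, …, n} such that α_j ≡ 0 (mod 2π) or α_j ≡ π (mod 2π), or there exists j ∈ {1, …, n−1} such that both α_j and α_{j+1} are congruent to π/2 or −π/2 (mod 2π). -/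
/-- The green-node (Z) rotation matrix. -/
noncomputable def Zm (θ : ℝ) : Matrix (Fin 2) (Fin 2) ℂ :=
  !![1, 0; 0, Complex.exp (θ * Complex.I)]

/-- The red-node (X) rotation matrix. -/
noncomputable def Xm (θ : ℝ) : Matrix (Fin 2) (Fin 2) ℂ :=
  (1 / 2 : ℂ) •
    !![1 + Complex.exp (θ * Complex.I), 1 - Complex.exp (θ * Complex.I);
       1 - Complex.exp (θ * Complex.I), 1 + Complex.exp (θ * Complex.I)]

/-- Congruence modulo `2π`. -/
def Cong (u v : ℝ) : Prop := ∃ k : ℤ, u - v = 2 * Real.pi * k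

/-- In a domain where two is neither zero nor a unit, a root of unity congruent to one modulo four
is equal to one. -/
lemma rs_torsion {R : Type*} [CommRing R] [IsDomain R] (h2 : (2 : R) ≠ 0) (hu : ¬ IsUnit (2 : R)) :
    ∀ (N : ℕ), 0 < N → ∀ u : R, (4 : R) ∣ u - 1 → u ^ N = 1 → u = 1 := by
  intro N
  induction N using Nat.strong_induction_on with
  | _ N ih =>
    intro hN u h4 hp
    rcases Nat.even_or_odd' N with ⟨m, hm | hm⟩
    · have hm0 : 0 < m := by omega
      have hd : (4 : R) ∣ u ^ 2 - 1 := h4.trans (sub_one_dvd_pow_sub_one u 2)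
      have h1 := ih m (by omega) hm0 (u ^ 2) hd (by rw [← pow_mul, ← hm, hp])
      rcases (sq_eq_one_iff.mp h1) with h | h
      · exact h
      · exfalso
        obtain ⟨w, hw⟩ := h4
        rw [h] at hw
        apply hu
        refine IsUnit.of_mul_eq_one (-w) ?_
        apply mul_left_cancel₀ h2
        linear_combination hw
    · by_contra hne
      have hg := mul_geom_sum u N
      rw [hp, sub_self] at hg
      have hs : ∑ i ∈ Finset.range N, u ^ i = 0 :=
        (mul_eq_zero.mp hg).resolve_left (sub_ne_zero.mpr hne)
      have hd : (2 : R) ∣ ∑ i ∈ Finset.range N, (u ^ i - 1) := by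
        apply Finset.dvd_sum
        intro i _
        exact ((Dvd.intro (2 : R) (by norm_num) : (2 : R) ∣ 4).trans h4).trans
          (sub_one_dvd_pow_sub_one u i)
      rw [Finset.sum_sub_distrib, hs, hm] at hd
      simp only [Finset.sum_const, Finset.card_range, nsmul_eq_mul, mul_one] at hd
      obtain ⟨w, hw⟩ := hd
      apply hu
      refine IsUnit.of_mul_eq_one (-w - m) ?_
      push_cast at hw
      linear_combination hw

lemma rs_exists_val : ∃ B : ValuationSubring ℂ, B.valuation 2 < 1 := by
  let A : Subring ℂ := (Int.castRingHom ℂ).range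
  have h2A : (2 : ℂ) ∈ A := ⟨2, by simp⟩
  have hI : Ideal.span {(⟨2, h2A⟩ : A)} ≠ ⊤ := by
    intro h
    rw [Ideal.span_singleton_eq_top] at h
    obtain ⟨⟨w, k, hk⟩, hw⟩ := h.exists_right_inv
    have h1 : (2 : ℂ) * w = 1 := congrArg Subtype.val hw
    rw [← hk] at h1
    have h3 : (2 : ℤ) * k = 1 := by
      have : (((2 : ℤ) * k : ℤ) : ℂ) = ((1 : ℤ) : ℂ) := by
        push_cast
        simpa using h1
      exact_mod_cast this
    omega
  obtain ⟨B, -, hB⟩ := Ideal.image_subset_nonunits_valuationSubring _ hI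
  refine ⟨B, ?_⟩
  have : (2 : ℂ) ∈ B.nonunits := hB ⟨⟨2, h2A⟩, Ideal.subset_span rfl, rfl⟩
  exact (B.mem_nonunits_iff).mp this

lemma rs_val_sub (B : ValuationSubring ℂ) (hB : B.valuation 2 < 1) (η : ℂ) (N : ℕ) (hN : 0 < N)
    (hη : η ^ N = 1) (hne : η ^ 2 ≠ 1) : B.valuation 2 < B.valuation (η - 1) := by
  by_contra hlt
  push Not at hlt
  have h20 : (0 : B.ValueGroup) < B.valuation 2 := by
    rw [zero_lt_iff, Valuation.ne_zero_iff]; norm_num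
  have hw : (η - 1) / 2 ∈ B := by
    rw [← B.valuation_le_one_iff, map_div₀]
    exact (div_le_one₀ h20).mpr hlt
  let w : B := ⟨(η - 1) / 2, hw⟩
  have hu : ¬ IsUnit (2 : B) := by
    have : (2 : B) ∈ IsLocalRing.maximalIdeal B := (B.valuation_lt_one_iff 2).mpr hB
    simpa using this
  have h2 : (2 : B) ≠ 0 := by
    intro h
    have : (2 : ℂ) = 0 := congrArg Subtype.val h
    norm_num at this
  have hcoe : ((1 + 2 * w : B) : ℂ) = η := by
    change 1 + 2 * ((η - 1) / 2) = η
    ring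
  have hpow : ((1 + 2 * w) ^ 2 : B) ^ N = 1 := by
    apply Subtype.ext
    change (((1 + 2 * w : B) : ℂ) ^ 2) ^ N = 1
    rw [hcoe, ← pow_mul, mul_comm, pow_mul, hη, one_pow]
  have h1 := rs_torsion h2 hu N hN ((1 + 2 * w) ^ 2) ⟨w + w ^ 2, by ring⟩ hpow
  apply hne
  have := congrArg Subtype.val h1
  change (((1 + 2 * w : B) : ℂ) ^ 2) = 1 at this
  rwa [hcoe] at this

/-- Cosine and sine of a generic rational angle have equal valuation greater than one. -/
lemma rs_val_trig (B : ValuationSubring ℂ) (hB : B.valuation 2 < 1) (c s : ℂ) (N : ℕ) (hN : 0 < N)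
    (hcs : c ^ 2 + s ^ 2 = 1) (hζ : (c + s * Complex.I) ^ N = 1) (hc : c ≠ 0) (hs : s ≠ 0) :
    1 < B.valuation c ∧ B.valuation s = B.valuation c := by
  set ζ := c + s * Complex.I with hzdef
  have hI := Complex.I_sq
  have hvz : B.valuation ζ = 1 := by
    have : B.valuation ζ ^ N = 1 := by rw [← map_pow, hζ, map_one]
    exact (pow_eq_one_iff_of_nonneg zero_le hN.ne').mp this
  have hvI : B.valuation Complex.I = 1 := by
    have : B.valuation Complex.I ^ 4 = 1 := by rw [← map_pow, Complex.I_pow_four, map_one]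
    exact (pow_eq_one_iff_of_nonneg zero_le (by norm_num)).mp this
  have hz0 : ζ ≠ 0 := by
    intro h
    rw [h, map_zero] at hvz
    exact zero_ne_one hvz
  have e1 : ζ ^ 2 + 1 = 2 * c * ζ := by
    rw [hzdef]; linear_combination s ^ 2 * hI - hcs
  have e2 : ζ ^ 2 - 1 = 2 * Complex.I * s * ζ := by
    rw [hzdef]; linear_combination (-s ^ 2) * hI + hcs
  have hne : (ζ ^ 2) ^ 2 ≠ 1 := by
    intro h
    have : (ζ ^ 2 + 1) * (ζ ^ 2 - 1) = 0 := by linear_combination h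
    rw [e1, e2] at this
    simp [hc, hs, hz0] at this
  have hp : (ζ ^ 2) ^ N = 1 := by rw [← pow_mul, mul_comm, pow_mul, hζ, one_pow]
  have hv2 := rs_val_sub B hB (ζ ^ 2) N hN hp hne
  have h20 : (0 : B.ValueGroup) < B.valuation 2 := by
    rw [zero_lt_iff, Valuation.ne_zero_iff]; norm_num
  have hsum : B.valuation (ζ ^ 2 + 1) = B.valuation (ζ ^ 2 - 1) := by
    have : ζ ^ 2 + 1 = (ζ ^ 2 - 1) + 2 := by ring
    rw [this, Valuation.map_add_eq_of_lt_left _ hv2]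
  have hsc : B.valuation s = B.valuation c := by
    rw [e1, e2] at hsum
    simp only [map_mul, hvI, hvz, mul_one] at hsum
    exact (mul_left_cancel₀ h20.ne' hsum).symm
  refine ⟨?_, hsc⟩
  rw [e2] at hv2
  simp only [map_mul, hvI, hvz, mul_one, hsc] at hv2
  by_contra hle
  push Not at hle
  have := mul_le_mul_of_nonneg_left hle (zero_le (a := B.valuation 2))
  rw [mul_one] at this
  exact absurd hv2 (not_lt.mpr this)

section states
variable {Γ : Type*} [LinearOrderedCommGroupWithZero Γ] (v : Valuation ℂ Γ)

/-- The general condition under which a generic rotation leads to the good state. -/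
def RsPre (a y b : ℂ) : Prop :=
  (v b < v y ∧ v a ≤ v y ∧ 1 ≤ v y) ∨ (v y < v b ∧ v a ≤ v b ∧ 1 ≤ v b)

/-- The state after a generic rotation. -/
def RsGood (a y b : ℂ) : Prop := v a = v y ∧ v b < v y ∧ 1 < v y

/-- The state after a quarter rotation. -/
def RsQuarter (a y b : ℂ) : Prop := RsPre v a y b ∧ (y ≠ 0 ∨ 1 < v b)

lemma rs_good_pre {a y b : ℂ} (h : RsGood v a y b) : RsPre v a y b :=
  Or.inl ⟨h.2.1, h.1.le, h.2.2.le⟩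

lemma rs_step_good {a y b c s : ℂ} (h : RsPre v a y b) (hc : 1 < v c) (hs : v s = v c) :
    RsGood v (b * c + y * s) (y * c - b * s) a := by
  have hc0 : 0 < v c := lt_trans zero_lt_one hc
  rcases h with ⟨h1, h2, h3⟩ | ⟨h1, h2, h3⟩
  · have hlt : v b * v c < v y * v c := mul_lt_mul_of_pos_right h1 hc0
    have e1 : v (b * c + y * s) = v y * v c := by
      rw [Valuation.map_add_eq_of_lt_right] <;> simp [hs, hlt]
    have e2 : v (y * c - b * s) = v y * v c := by
      rw [sub_eq_add_neg, Valuation.map_add_eq_of_lt_left] <;> simp [hs, hlt]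
    have hy : v y < v y * v c := by
      have := mul_lt_mul_of_pos_left hc (lt_of_lt_of_le zero_lt_one h3)
      rwa [mul_one] at this
    exact ⟨by rw [e1, e2], by rw [e2]; exact lt_of_le_of_lt h2 hy,
      by rw [e2]; exact lt_of_le_of_lt h3 hy⟩
  · have hlt : v y * v c < v b * v c := mul_lt_mul_of_pos_right h1 hc0
    have e1 : v (b * c + y * s) = v b * v c := by
      rw [Valuation.map_add_eq_of_lt_left] <;> simp [hs, hlt]
    have e2 : v (y * c - b * s) = v b * v c := by
      rw [sub_eq_add_neg, Valuation.map_add_eq_of_lt_right] <;> simp [hs, hlt]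
    have hy : v b < v b * v c := by
      have := mul_lt_mul_of_pos_left hc (lt_of_lt_of_le zero_lt_one h3)
      rwa [mul_one] at this
    exact ⟨by rw [e1, e2], by rw [e2]; exact lt_of_le_of_lt h2 hy,
      by rw [e2]; exact lt_of_le_of_lt h3 hy⟩

lemma rs_step_quarter {a y b c s : ℂ} (h : RsGood v a y b) (hc : c = 0) (hs : v s = 1) :
    RsQuarter v (b * c + y * s) (y * c - b * s) a := by
  obtain ⟨h1, h2, h3⟩ := h
  subst hc
  have e1 : v (b * 0 + y * s) = v y := by simp [hs]
  have e2 : v (y * 0 - b * s) = v b := by simp [hs]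
  refine ⟨Or.inr ⟨?_, ?_, ?_⟩, Or.inr ?_⟩
  · rw [e2, h1]; exact h2
  · rw [e1, h1]
  · rw [h1]; exact h3.le
  · rw [h1]; exact h3

lemma rs_start_quarter {c s : ℂ} (hc : c = 0) (hs : v s = 1) :
    RsQuarter v (1 * c + 0 * s) (0 * c - 1 * s) 0 := by
  subst hc
  refine ⟨Or.inl ⟨?_, ?_, ?_⟩, Or.inl ?_⟩
  · simp [hs]
  · simp
  · simp [hs]
  · intro h
    have : s = 0 := by simpa using h
    rw [this, map_zero] at hs
    exact zero_ne_one hs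

end states

/-- A traceless matrix in Pauli coordinates. -/
noncomputable def RsW (x y z : ℂ) : Matrix (Fin 2) (Fin 2) ℂ :=
  !![z, x - Complex.I * y; x + Complex.I * y, -z]

/-- Coordinates seen from the next rotation. -/
noncomputable def RsV (k : ℕ) (a y b : ℂ) : Matrix (Fin 2) (Fin 2) ℂ :=
  if k % 2 = 0 then RsW b y a else RsW a y b

lemma rs_Z (x y z c s : ℂ) (θ : ℝ) (he : Complex.exp (θ * Complex.I) = c + s * Complex.I)
    (hcs : c ^ 2 + s ^ 2 = 1) :
    RsW x y z * Zm θ = Zm θ * RsW (x * c + y * s) (y * c - x * s) z := by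
  have hI := Complex.I_sq
  unfold RsW Zm
  rw [he]
  ext i j
  fin_cases i <;> fin_cases j <;> simp [Matrix.mul_apply, Fin.sum_univ_two]
  · linear_combination (-s*y) * hI
  · linear_combination (-s*y*c+s^2*x) * hI + (-x - Complex.I * y) * hcs 
  · ring

lemma rs_X (x y z c s : ℂ) (θ : ℝ) (he : Complex.exp (θ * Complex.I) = c + s * Complex.I)
    (hcs : c ^ 2 + s ^ 2 = 1) :
    RsW x y z * Xm θ = Xm θ * RsW x (y * c + z * s) (z * c - y * s) := by
  have hI := Complex.I_sq
  unfold RsW Xm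
  rw [he]
  ext i j
  fin_cases i <;> fin_cases j <;> simp [Matrix.mul_apply, Fin.sum_univ_two]
  · ring_nf; simp only [Complex.I_sq]; ring_nf; linear_combination (-(z - Complex.I * y) / 2) * hcs
  · ring_nf; simp only [Complex.I_sq]; ring_nf; linear_combination (-(z - Complex.I * y) / 2) * hcs
  · ring_nf; simp only [Complex.I_sq]; ring_nf; linear_combination ((z - Complex.I * y) / 2) * hcs
  · ring_nf; simp only [Complex.I_sq]; ring_nf; linear_combination ((z - Complex.I * y) / 2) * hcs

/-- The alternating factors. -/
noncomputable def RsF (β : ℕ → ℝ) (k : ℕ) : Matrix (Fin 2) (Fin 2) ℂ :=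
  if k % 2 = 0 then Zm (β k) else Xm (β k)

/-- Prefix products. -/
noncomputable def RsP (β : ℕ → ℝ) : ℕ → Matrix (Fin 2) (Fin 2) ℂ
  | 0 => 1
  | k + 1 => RsP β k * RsF β k

lemma rs_ofFn (β : ℕ → ℝ) (n : ℕ) :
    (List.ofFn fun j : Fin n => RsF β j).prod = RsP β n := by
  induction n with
  | zero => simp [RsP]
  | succ n ih =>
    rw [List.ofFn_succ_last, List.prod_append]
    simp only [Fin.val_castSucc, Fin.val_last, List.prod_singleton]
    rw [ih, RsP]

lemma rs_step (β : ℕ → ℝ) (k : ℕ) : ∃ c s : ℂ, c = Complex.cos (β k) ∧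
    (s = Complex.sin (β k) ∨ s = -Complex.sin (β k)) ∧ ∀ a y b : ℂ,
    RsV k a y b * RsF β k = RsF β k * RsV (k + 1) (b * c + y * s) (y * c - b * s) a := by
  have he := Complex.exp_mul_I (β k : ℂ)
  have hcs : Complex.cos (β k) ^ 2 + Complex.sin (β k) ^ 2 = 1 := by
    rw [add_comm]; exact Complex.sin_sq_add_cos_sq _
  rcases Nat.mod_two_eq_zero_or_one k with h | h
  · have h' : (k + 1) % 2 = 1 := by omega
    refine ⟨_, _, rfl, Or.inl rfl, fun a y b => ?_⟩
    simp only [RsV, RsF, h, h', if_true, one_ne_zero, if_false]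
    exact rs_Z b y a _ _ _ he hcs
  · have h' : (k + 1) % 2 = 0 := by omega
    refine ⟨_, _, rfl, Or.inr rfl, fun a y b => ?_⟩
    simp only [RsV, RsF, h, h', if_true, one_ne_zero, if_false]
    rw [rs_X a y b _ _ _ he hcs]
    congr 2 <;> ring

lemma rs_root (θ : ℝ) (h : ∃ q : ℚ, θ / Real.pi = q) :
    ∃ N : ℕ, 0 < N ∧ (Complex.cos θ + Complex.sin θ * Complex.I) ^ N = 1 := by
  obtain ⟨q, hq⟩ := h
  refine ⟨2 * q.den, by have := q.den_pos; omega, ?_⟩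
  rw [← Complex.exp_mul_I, ← Complex.exp_nat_mul, Complex.exp_eq_one_iff]
  refine ⟨q.num, ?_⟩
  have h1 : θ = q * Real.pi := by
    rw [← hq]; field_simp
  have h2 : (q : ℂ) * q.den = q.num := by exact_mod_cast Rat.mul_den_eq_num q
  rw [h1]
  push_cast
  linear_combination 2 * Real.pi * Complex.I * h2

lemma rs_sin (θ : ℝ) (h0 : ¬ Cong θ 0) (h1 : ¬ Cong θ Real.pi) : Complex.sin θ ≠ 0 := by
  intro h
  rw [← Complex.ofReal_sin, Complex.ofReal_eq_zero, Real.sin_eq_zero_iff] at h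
  obtain ⟨m, hm⟩ := h
  rcases Int.even_or_odd' m with ⟨r, hr | hr⟩
  · exact h0 ⟨r, by rw [← hm, hr]; push_cast; ring⟩
  · exact h1 ⟨r, by rw [← hm, hr]; push_cast; ring⟩

lemma rs_cos (θ : ℝ) (h : Complex.cos θ = 0) :
    Cong θ (Real.pi / 2) ∨ Cong θ (-(Real.pi / 2)) := by
  rw [← Complex.ofReal_cos, Complex.ofReal_eq_zero, Real.cos_eq_zero_iff] at h
  obtain ⟨m, hm⟩ := h
  rcases Int.even_or_odd' m with ⟨r, hr | hr⟩
  · exact Or.inl ⟨r, by rw [hm, hr]; push_cast; ring⟩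
  · exact Or.inr ⟨r + 1, by rw [hm, hr]; push_cast; ring⟩

lemma rs_main (B : ValuationSubring ℂ) (hB : B.valuation 2 < 1) (β : ℕ → ℝ) (n : ℕ)
    (hrat : ∀ k < n, ∃ q : ℚ, β k / Real.pi = q)
    (hsin : ∀ k < n, Complex.sin (β k) ≠ 0)
    (hcos : ∀ k, k + 1 < n → Complex.cos (β k) = 0 → Complex.cos (β (k + 1)) ≠ 0) :
    ∀ k < n, ∃ a y b : ℂ, RsW 1 0 0 * RsP β (k + 1) = RsP β (k + 1) * RsV (k + 1) a y b ∧
      ((RsGood B.valuation a y b) ∨ (Complex.cos (β k) = 0 ∧ RsQuarter B.valuation a y b)) := by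
  have key : ∀ k < n, ∃ c s : ℂ, (∀ a y b : ℂ,
      RsV k a y b * RsF β k = RsF β k * RsV (k + 1) (b * c + y * s) (y * c - b * s) a) ∧
      ((1 < B.valuation c ∧ B.valuation s = B.valuation c) ∨
        (Complex.cos (β k) = 0 ∧ c = 0 ∧ B.valuation s = 1)) := by
    intro k hk
    obtain ⟨c, s, hc, hs, hrel⟩ := rs_step β k
    have hvs : B.valuation s = B.valuation (Complex.sin (β k)) := by
      rcases hs with h | h <;> simp [h]
    have hcs : Complex.cos (β k) ^ 2 + Complex.sin (β k) ^ 2 = 1 := by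
      rw [add_comm]; exact Complex.sin_sq_add_cos_sq _
    refine ⟨c, s, hrel, ?_⟩
    by_cases h0 : Complex.cos (β k) = 0
    · right
      refine ⟨h0, hc.trans h0, ?_⟩
      rw [hvs]
      have h1 : Complex.sin (β k) ^ 2 = 1 := by rw [h0] at hcs; linear_combination hcs
      have : B.valuation (Complex.sin (β k)) ^ 2 = 1 := by rw [← map_pow, h1, map_one]
      exact (pow_eq_one_iff_of_nonneg zero_le (by norm_num)).mp this
    · left
      obtain ⟨N, hN, hr⟩ := rs_root (β k) (hrat k hk)
      rw [hvs, hc]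
      exact rs_val_trig B hB _ _ N hN hcs hr h0 (hsin k hk)
  intro k
  induction k with
  | zero =>
    intro hk
    obtain ⟨c, s, hrel, hst⟩ := key 0 hk
    refine ⟨1 * c + 0 * s, 0 * c - 1 * s, 0, ?_, ?_⟩
    · have := hrel 0 0 1
      simpa [RsP, RsV] using this
    · rcases hst with ⟨h1, h2⟩ | ⟨h0, h1, h2⟩
      · left
        exact rs_step_good _ (Or.inr ⟨by simp, by simp, by simp⟩) h1 h2
      · right
        exact ⟨h0, rs_start_quarter _ h1 h2⟩
  | succ k ih =>
    intro hk
    obtain ⟨a, y, b, hW, hst⟩ := ih (by omega)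
    obtain ⟨c, s, hrel, hst2⟩ := key (k + 1) hk
    refine ⟨b * c + y * s, y * c - b * s, a, ?_, ?_⟩
    · have hP : RsP β (k + 1 + 1) = RsP β (k + 1) * RsF β (k + 1) := rfl
      rw [hP, ← Matrix.mul_assoc, hW, Matrix.mul_assoc, hrel, Matrix.mul_assoc]
    · rcases hst2 with ⟨h1, h2⟩ | ⟨h0, h1, h2⟩
      · left
        refine rs_step_good _ ?_ h1 h2
        rcases hst with h | h
        · exact rs_good_pre _ h
        · exact h.2.1
      · right
        refine ⟨h0, ?_⟩
        rcases hst with h | h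
        · exact rs_step_quarter _ h h1 h2
        · exact absurd h0 (hcos k hk h.1)

lemma rs_W_inj {x y z : ℂ} (h : RsW 1 0 0 = RsW x y z) : x = 1 ∧ y = 0 ∧ z = 0 := by
  unfold RsW at h
  have h00 := congrFun (congrFun h 0) 0
  have h01 := congrFun (congrFun h 0) 1
  have h10 := congrFun (congrFun h 1) 0
  simp at h00 h01 h10
  have hx : x = 1 := by linear_combination (-1 / 2 : ℂ) * h01 - (1 / 2 : ℂ) * h10
  refine ⟨hx, ?_, h00.symm⟩
  have : Complex.I * y = 0 := by linear_combination (1 / 2 : ℂ) * h01 - (1 / 2 : ℂ) * h10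
  simpa using this

theorem radin_sadun (n : ℕ) (hn : 1 ≤ n) (α : Fin n → ℝ)
    (hrat : ∀ j, ∃ q : ℚ, α j / Real.pi = q)
    (M : Matrix (Fin 2) (Fin 2) ℂ)
    (hM : M = (List.ofFn fun j : Fin n =>
      if (j : ℕ) % 2 = 0 then Zm (α j) else Xm (α j)).prod)
    (h : ∃ lam : ℂ, lam ≠ 0 ∧ M = lam • (1 : Matrix (Fin 2) (Fin 2) ℂ)) :
    (∃ j : Fin n, Cong (α j) 0 ∨ Cong (α j) Real.pi) ∨
    (∃ j : Fin n, ∃ hj : (j : ℕ) + 1 < n,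
      (Cong (α j) (Real.pi / 2) ∨ Cong (α j) (-(Real.pi / 2))) ∧
      (Cong (α ⟨(j : ℕ) + 1, hj⟩) (Real.pi / 2) ∨
        Cong (α ⟨(j : ℕ) + 1, hj⟩) (-(Real.pi / 2)))) := by
  by_contra hcon
  rw [not_or] at hcon
  obtain ⟨hc1, hc2⟩ := hcon
  obtain ⟨B, hB⟩ := rs_exists_val
  let β : ℕ → ℝ := fun k => if hk : k < n then α ⟨k, hk⟩ else 0
  have hβ : ∀ (k : ℕ) (hk : k < n), β k = α ⟨k, hk⟩ := fun k hk => dif_pos hk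
  have hMP : M = RsP β n := by
    rw [hM, ← rs_ofFn]
    congr 2
    funext j
    simp only [RsF, hβ j j.2]
  have hr : ∀ k < n, ∃ q : ℚ, β k / Real.pi = q := by
    intro k hk
    rw [hβ k hk]
    exact hrat _
  have hs : ∀ k < n, Complex.sin (β k) ≠ 0 := by
    intro k hk
    rw [hβ k hk]
    exact rs_sin _ (fun hh => hc1 ⟨_, Or.inl hh⟩) (fun hh => hc1 ⟨_, Or.inr hh⟩)
  have hc : ∀ k, k + 1 < n → Complex.cos (β k) = 0 → Complex.cos (β (k + 1)) ≠ 0 := by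
    intro k hk h0 h1
    rw [hβ k (by omega)] at h0
    rw [hβ (k + 1) hk] at h1
    exact hc2 ⟨⟨k, by omega⟩, hk, rs_cos _ h0, rs_cos _ h1⟩
  obtain ⟨a, y, b, hW, hst⟩ := rs_main B hB β n hr hs hc (n - 1) (by omega)
  have hn1 : n - 1 + 1 = n := by omega
  rw [hn1, ← hMP] at hW
  obtain ⟨lam, hl, hlam⟩ := h
  rw [hlam, Matrix.mul_smul, Matrix.smul_mul, Matrix.mul_one, Matrix.one_mul] at hW
  have hW2 : RsW 1 0 0 = RsV n a y b := smul_right_injective _ hl hW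
  have hfin : y = 0 ∧ B.valuation a ≤ 1 ∧ B.valuation b ≤ 1 := by
    unfold RsV at hW2
    split_ifs at hW2
    · obtain ⟨h1, h2, h3⟩ := rs_W_inj hW2
      exact ⟨h2, by simp [h3], by simp [h1]⟩
    · obtain ⟨h1, h2, h3⟩ := rs_W_inj hW2
      exact ⟨h2, by simp [h1], by simp [h3]⟩
  obtain ⟨hy, ha, hb⟩ := hfin
  rcases hst with hg | ⟨-, -, hq⟩
  · have := hg.2.2
    rw [hy, map_zero] at this
    exact absurd this (not_lt.mpr zero_le_one)
  · rcases hq with hq | hq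
    · exact hq hy
    · exact absurd hq (not_lt.mpr hb)
end

section
/- Let α₁, α₂, α₃, β₁, β₂, β₃ be real numbers with each α_j/π and β_j/π rational. Suppose there exists a nonzero complex number λ such that Z(α₁)·X(α₂)·Z(α₃) = λ·X(β₁)·Z(β₂)·X(β₃). Then either one of the six angles α₁, α₂, α₃, β₁, β₂, β₃ is congruent to 0 or to π modulo 2π, or one of the pairs (α₁, α₂), (α₂, α₃), (α₃, β₃), (α₁, β₁), (β₁, β₂), (β₂, β₃) has both of its members congruent to π/2 or −π/2 modulo 2π. -/
/-- Congruence to `π/2` or `-π/2` modulo `2π`. -/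
def HalfPi (u : ℝ) : Prop := Cong u (Real.pi / 2) ∨ Cong u (-(Real.pi / 2))

theorem exists_val2 : ∃ V : ValuationSubring ℂ,
    (∀ w : ℂ, IsIntegral ℤ w → V.valuation w ≤ 1) ∧ V.valuation 2 < 1 := by
  have hx : (2 : ℂ)⁻¹ ∉ (integralClosure ℤ ℂ).toSubring := by
    intro h
    have h1 : IsIntegral ℤ (2 : ℂ)⁻¹ := h
    have h2 : IsIntegral ℤ (2 : ℚ)⁻¹ := by
      have e : (2 : ℂ)⁻¹ = algebraMap ℚ ℂ (2 : ℚ)⁻¹ := by simp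
      rw [e] at h1
      exact (isIntegral_algebraMap_iff (algebraMap ℚ ℂ).injective).1 h1
    obtain ⟨y, hy⟩ := IsIntegrallyClosed.isIntegral_iff.1 h2
    have h3 : (2 : ℚ) * y = 1 := by
      have : (y : ℚ) = 2⁻¹ := by simpa using hy
      rw [this]; norm_num
    have h4 : (2 : ℤ) * y = 1 := by exact_mod_cast h3
    omega
  have : IsIntegrallyClosedIn (integralClosure ℤ ℂ).toSubring ℂ :=
    inferInstanceAs (IsIntegrallyClosedIn (integralClosure ℤ ℂ) ℂ)
  obtain ⟨V, hV, h2⟩ := Subring.exists_le_valuationSubring_of_isIntegrallyClosedIn hx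
  refine ⟨V, fun w hw => (V.valuation_le_one_iff w).2 (hV hw), ?_⟩
  rw [← V.valuation_le_one_iff, map_inv₀, not_le] at h2
  by_contra hc
  exact absurd h2 (not_lt.2 (inv_le_one_of_one_le₀ (not_lt.1 hc)))

section val
variable {Γ : Type*} [LinearOrderedCommGroupWithZero Γ] (v : Valuation ℂ Γ)

theorem val_root {w : ℂ} {n : ℕ} (hn : n ≠ 0) (h : w ^ n = 1) : v w = 1 := by
  have : v w ^ n = 1 := by rw [← map_pow, h, map_one]
  exact (pow_eq_one_iff_of_nonneg zero_le hn).1 this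

theorem val_odd (h2 : v 2 < 1) {w : ℂ} {n : ℕ} (hn : Odd n) (h : w ^ n = 1) (hw : w ≠ 1) :
    v 2 < v (w - 1) := by
  by_contra hc
  have hc1 : v (w - 1) < 1 := lt_of_le_of_lt (not_lt.1 hc) h2
  have hvw : v w = 1 := val_root v hn.pos.ne' h
  have hpow : ∀ i : ℕ, v (w ^ i - 1) < 1 := by
    intro i
    induction i with
    | zero => simp
    | succ i ih =>
      have e : w ^ (i + 1) - 1 = w ^ i * (w - 1) + (w ^ i - 1) := by ring
      rw [e]
      refine v.map_add_lt ?_ ih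
      rw [map_mul, map_pow, hvw, one_pow, one_mul]
      exact hc1
  have hs : ∑ i ∈ Finset.range n, w ^ i = 0 := by
    have := mul_geom_sum w n
    rw [h, sub_self] at this
    exact (mul_eq_zero.1 this).resolve_left (sub_ne_zero.2 hw)
  have hs2 : v (∑ i ∈ Finset.range n, (w ^ i - 1)) < 1 :=
    v.map_sum_lt' zero_lt_one (fun i _ => hpow i)
  rw [Finset.sum_sub_distrib, hs] at hs2
  simp only [Finset.sum_const, Finset.card_range, nsmul_eq_mul, mul_one, zero_sub,
    Valuation.map_neg] at hs2
  obtain ⟨k, rfl⟩ := hn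
  have hk : v (k : ℂ) ≤ 1 := by
    clear * -
    induction k with
    | zero => simp
    | succ k ih => push_cast; exact v.map_add_le ih (by simp)
  have h1 : v (1 : ℂ) < 1 := by
    have e : (1 : ℂ) = ((2 * k + 1 : ℕ) : ℂ) - 2 * k := by push_cast; ring
    rw [e]
    refine lt_of_le_of_lt (v.map_sub _ _) (max_lt hs2 ?_)
    rw [map_mul]
    exact lt_of_le_of_lt (mul_le_of_le_one_right' hk) h2
  simp at h1

theorem val_two_pow (h2 : v 2 < 1) {k : ℕ} (hk : Odd k) (a : ℕ) : ∀ w : ℂ,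
    w ^ (2 ^ a * k) = 1 → w = 1 ∨ w = -1 ∨ v 2 < v (w - 1) := by
  induction a with
  | zero =>
    intro w h
    by_cases hw : w = 1
    · exact Or.inl hw
    · exact Or.inr (Or.inr (val_odd v h2 hk (by simpa using h) hw))
  | succ a ih =>
    intro w h
    have hvw : v w = 1 := val_root v (by have := hk.pos; positivity) h
    have hp : v (w + 1) ≤ 1 := v.map_add_le hvw.le (by simp)
    rcases ih (w ^ 2) (by rw [← pow_mul, ← h]; ring_nf) with h1 | h1 | h1
    · rcases mul_self_eq_one_iff.1 ((sq w).symm.trans h1) with h | h <;> simp [h]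
    · right; right
      have e : v (w - 1) * v (w - 1) = v 2 := by
        rw [← map_mul]
        have : (w - 1) * (w - 1) = - (2 * w) := by linear_combination h1
        rw [this, Valuation.map_neg, map_mul, hvw, mul_one]
      by_contra hc
      rw [not_lt] at hc
      have h0 : 0 < v 2 := by simp [zero_lt_iff]
      have : v (w - 1) * v (w - 1) ≤ v 2 * v 2 := mul_le_mul' hc hc
      rw [e] at this
      exact absurd this (not_le.2 (mul_lt_of_lt_one_right h0 h2))
    · right; right
      refine lt_of_lt_of_le h1 ?_
      have e : w ^ 2 - 1 = (w - 1) * (w + 1) := by ring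
      rw [e, map_mul]
      exact mul_le_of_le_one_right' hp

theorem val_trig (h2 : v 2 < 1) {θ : ℝ} (hθ : ∃ q : ℚ, θ / Real.pi = q)
    (h0 : ¬ Cong θ 0) (hpi : ¬ Cong θ Real.pi) :
    (HalfPi θ ∧ Complex.cos θ = 0 ∧ v (Complex.sin θ) = 1) ∨
    (1 < v (Complex.cos θ) ∧ v (Complex.sin θ) = v (Complex.cos θ)) := by
  obtain ⟨q, hq⟩ := hθ
  have hpi0 := Real.pi_ne_zero
  have hsin : Complex.sin θ ≠ 0 := by
    rw [← Complex.ofReal_sin]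
    intro h
    obtain ⟨n, hn⟩ := Real.sin_eq_zero_iff.1 (Complex.ofReal_eq_zero.1 h)
    rcases Int.even_or_odd' n with ⟨m, rfl | rfl⟩
    · exact h0 ⟨m, by rw [← hn]; push_cast; ring⟩
    · exact hpi ⟨m, by rw [← hn]; push_cast; ring⟩
  by_cases hcos : Complex.cos θ = 0
  · left
    refine ⟨?_, hcos, ?_⟩
    · rw [← Complex.ofReal_cos] at hcos
      obtain ⟨n, hn⟩ := Real.cos_eq_zero_iff.1 (Complex.ofReal_eq_zero.1 hcos)
      rcases Int.even_or_odd' n with ⟨m, rfl | rfl⟩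
      · exact Or.inl ⟨m, by rw [hn]; push_cast; ring⟩
      · exact Or.inr ⟨m + 1, by rw [hn]; push_cast; ring⟩
    · have := Complex.sin_sq_add_cos_sq (θ : ℂ)
      rw [hcos] at this
      exact val_root v two_ne_zero (by simpa using this)
  right
  set z := Complex.exp (θ * Complex.I) with hz
  have hz0 : z ≠ 0 := Complex.exp_ne_zero _
  have hzn : Complex.exp (-θ * Complex.I) = z⁻¹ := by rw [hz, ← Complex.exp_neg]; ring_nf
  have ec : 2 * z * Complex.cos θ = z ^ 2 + 1 := by
    rw [Complex.cos, hzn, ← hz]; field_simp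
  have es : 2 * z * Complex.I * Complex.sin θ = z ^ 2 - 1 := by
    rw [Complex.sin, hzn, ← hz]; field_simp; ring_nf; simp
  have hroot : z ^ (2 * q.den) = 1 := by
    rw [hz, ← Complex.exp_nat_mul, Complex.exp_eq_one_iff]
    refine ⟨q.num, ?_⟩
    have h1 : θ = Real.pi * q := by rw [← hq]; field_simp
    have h3 : (q : ℝ) * q.den = q.num := by exact_mod_cast Rat.mul_den_eq_num q
    have h4 : θ * q.den = Real.pi * q.num := by rw [h1, mul_assoc, h3]
    have h5 : (θ : ℂ) * q.den = Real.pi * q.num := by exact_mod_cast h4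
    push_cast
    linear_combination 2 * Complex.I * h5
  have hd : 2 * q.den ≠ 0 := by have := q.den_nz; omega
  have hvz : v z = 1 := val_root v hd hroot
  have hvI : v Complex.I = 1 := val_root v (n := 4) (by norm_num) (by simp)
  obtain ⟨a, k, hk, hak⟩ := Nat.exists_eq_two_pow_mul_odd hd
  have hz2 : (z ^ 2) ^ (2 ^ a * k) = 1 := by
    rw [← hak, ← pow_mul, mul_comm, pow_mul, hroot, one_pow]
  have hne1 : z ^ 2 - 1 ≠ 0 := by rw [← es]; simp [hz0, hsin]
  have hne2 : z ^ 2 + 1 ≠ 0 := by rw [← ec]; simp [hz0, hcos]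
  have hlt : v 2 < v (z ^ 2 - 1) := by
    rcases val_two_pow v h2 hk a _ hz2 with h | h | h
    · exact absurd (by rw [h]; ring) hne1
    · exact absurd (by rw [h]; ring) hne2
    · exact h
  have heq : v (z ^ 2 + 1) = v (z ^ 2 - 1) := by
    have e : z ^ 2 + 1 = (z ^ 2 - 1) + 2 := by ring
    rw [e]
    exact v.map_add_eq_of_lt_left hlt
  have vc : v 2 * v (Complex.cos θ) = v (z ^ 2 - 1) := by
    rw [← heq, ← ec]; simp [hvz]
  have vs : v 2 * v (Complex.sin θ) = v (z ^ 2 - 1) := by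
    rw [← es]; simp [hvz, hvI]
  have h20 : v 2 ≠ 0 := by simp
  refine ⟨?_, mul_left_cancel₀ h20 (vs.trans vc.symm)⟩
  by_contra hc
  rw [← vc] at hlt
  exact absurd hlt (not_lt.2 (mul_le_of_le_one_right' (not_lt.1 hc)))

/-- Ultrametric domination in the spherical cosine relation. -/
theorem val_step {c c1 c3 s1 s3 d : ℂ} (h : c = c1 * c3 - s1 * s3 * d)
    (h1 : v c1 ≤ v s1) (h3 : v c3 ≤ v s3) (k1 : 1 ≤ v s1) (k3 : 1 ≤ v s3) (hd : 1 < v d) :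
    v c = v s1 * v s3 * v d := by
  have hlt : v (c1 * c3) < v (s1 * s3 * d) := by
    simp only [map_mul]
    have hpos : 0 < v s1 * v s3 :=
      lt_of_lt_of_le zero_lt_one (one_le_mul k1 k3)
    exact lt_of_le_of_lt (mul_le_mul' h1 h3) (lt_mul_of_one_lt_right hpos hd)
  rw [h, v.map_sub_eq_of_lt_right hlt]
  simp

end val

theorem euler_cos {a₁ a₂ a₃ b₁ b₂ b₃ : ℝ} {l : ℂ} (hl : l ≠ 0)
    (h : Zm a₁ * Xm a₂ * Zm a₃ = l • (Xm b₁ * Zm b₂ * Xm b₃)) :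
    Complex.cos a₂ = Complex.cos b₁ * Complex.cos b₃
      - Complex.sin b₁ * Complex.sin b₃ * Complex.cos b₂ := by
  have hn : ∀ t : ℝ, Complex.exp (-t * Complex.I) = (Complex.exp (t * Complex.I))⁻¹ := by
    intro t; rw [← Complex.exp_neg]; ring_nf
  have e00 := congrFun (congrFun h 0) 0
  have e01 := congrFun (congrFun h 0) 1
  have e10 := congrFun (congrFun h 1) 0
  have e11 := congrFun (congrFun h 1) 1
  simp only [Complex.cos, Complex.sin, hn]
  simp [Zm, Xm, Matrix.mul_apply, Fin.sum_univ_two] at e00 e01 e10 e11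
  have x1 := Complex.exp_ne_zero (a₁ * Complex.I)
  have x2 := Complex.exp_ne_zero (a₂ * Complex.I)
  have x3 := Complex.exp_ne_zero (a₃ * Complex.I)
  have y1 := Complex.exp_ne_zero (b₁ * Complex.I)
  have y2 := Complex.exp_ne_zero (b₂ * Complex.I)
  have y3 := Complex.exp_ne_zero (b₃ * Complex.I)
  generalize Complex.exp (a₁ * Complex.I) = x₁ at *
  generalize Complex.exp (a₂ * Complex.I) = x₂ at *
  generalize Complex.exp (a₃ * Complex.I) = x₃ at *
  generalize Complex.exp (b₁ * Complex.I) = z₁ at *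
  generalize Complex.exp (b₂ * Complex.I) = z₂ at *
  generalize Complex.exp (b₃ * Complex.I) = z₃ at *
  have p := congrArg₂ (· * ·) e00 e11
  have r := congrArg₂ (· * ·) e01 e10
  have hD : x₁ * x₂ * x₃ = l ^ 2 * (z₁ * z₂ * z₃) := by
    linear_combination p - r
  have hA : x₁ * x₃ * (1 + x₂ ^ 2) / 2 = l ^ 2 * (z₁ * z₂ * z₃ *
      ((z₁ + z₁⁻¹) / 2 * ((z₃ + z₃⁻¹) / 2) - ((z₁⁻¹ - z₁) * Complex.I / 2) *
        ((z₃⁻¹ - z₃) * Complex.I / 2) * ((z₂ + z₂⁻¹) / 2))) := by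
    have hI : Complex.I ^ 2 = -1 := Complex.I_sq
    have : z₁ * z₂ * z₃ *
      ((z₁ + z₁⁻¹) / 2 * ((z₃ + z₃⁻¹) / 2) - ((z₁⁻¹ - z₁) * Complex.I / 2) *
        ((z₃⁻¹ - z₃) * Complex.I / 2) * ((z₂ + z₂⁻¹) / 2)) =
      (2 * z₂ * (z₁ ^ 2 + 1) * (z₃ ^ 2 + 1) + (1 - z₁ ^ 2) * (1 - z₃ ^ 2) * (z₂ ^ 2 + 1)) / 8 := by
      field_simp
      rw [hI]
      ring
    rw [this]
    linear_combination p + r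
  have hD0 : x₁ * x₂ * x₃ ≠ 0 := by simp [*]
  refine mul_left_cancel₀ hD0 ?_
  calc x₁ * x₂ * x₃ * ((x₂ + x₂⁻¹) / 2) = x₁ * x₃ * (1 + x₂ ^ 2) / 2 := by field_simp; ring
    _ = _ := by rw [hA, hD]; ring

theorem euler_swap {a₁ a₂ a₃ b₁ b₂ b₃ : ℝ} {l : ℂ} (hl : l ≠ 0)
    (h : Zm a₁ * Xm a₂ * Zm a₃ = l • (Xm b₁ * Zm b₂ * Xm b₃)) :
    Zm b₁ * Xm b₂ * Zm b₃ = l⁻¹ • (Xm a₁ * Zm a₂ * Xm a₃) := by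
  let G : Matrix (Fin 2) (Fin 2) ℂ := !![1, 1; 1, -1]
  have gx : ∀ t, G * Xm t = Zm t * G := by
    intro t; ext i j; fin_cases i <;> fin_cases j <;>
      simp [G, Xm, Zm, Matrix.mul_apply, Fin.sum_univ_two] <;> ring
  have gz : ∀ t, G * Zm t = Xm t * G := by
    intro t; ext i j; fin_cases i <;> fin_cases j <;>
      simp [G, Xm, Zm, Matrix.mul_apply, Fin.sum_univ_two] <;> ring
  have gg : G * G = (2 : ℂ) • 1 := by
    ext i j; fin_cases i <;> fin_cases j <;>
      simp [G, Matrix.mul_apply, Fin.sum_univ_two] <;> norm_num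
  have h1 : G * (Zm a₁ * Xm a₂ * Zm a₃) * G = (2 : ℂ) • (Xm a₁ * Zm a₂ * Xm a₃) := by
    calc _ = (G * Zm a₁) * Xm a₂ * Zm a₃ * G := by simp only [mul_assoc]
      _ = Xm a₁ * (G * Xm a₂) * Zm a₃ * G := by rw [gz]; simp only [mul_assoc]
      _ = Xm a₁ * Zm a₂ * (G * Zm a₃) * G := by rw [gx]; simp only [mul_assoc]
      _ = Xm a₁ * Zm a₂ * Xm a₃ * (G * G) := by rw [gz]; simp only [mul_assoc]
      _ = _ := by rw [gg]; simp
  have h2 : G * (Xm b₁ * Zm b₂ * Xm b₃) * G = (2 : ℂ) • (Zm b₁ * Xm b₂ * Zm b₃) := by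
    calc _ = (G * Xm b₁) * Zm b₂ * Xm b₃ * G := by simp only [mul_assoc]
      _ = Zm b₁ * (G * Zm b₂) * Xm b₃ * G := by rw [gx]; simp only [mul_assoc]
      _ = Zm b₁ * Xm b₂ * (G * Xm b₃) * G := by rw [gz]; simp only [mul_assoc]
      _ = Zm b₁ * Xm b₂ * Zm b₃ * (G * G) := by rw [gx]; simp only [mul_assoc]
      _ = _ := by rw [gg]; simp
  rw [h, Matrix.mul_smul, Matrix.smul_mul, h2, smul_comm] at h1
  have h3 := smul_right_injective _ (two_ne_zero (α := ℂ)) h1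
  rw [← h3, smul_smul, inv_mul_cancel₀ hl, one_smul]

theorem euler_rational_constraints (α₁ α₂ α₃ β₁ β₂ β₃ : ℝ)
    (hα₁ : ∃ q : ℚ, α₁ / Real.pi = q) (hα₂ : ∃ q : ℚ, α₂ / Real.pi = q)
    (hα₃ : ∃ q : ℚ, α₃ / Real.pi = q) (hβ₁ : ∃ q : ℚ, β₁ / Real.pi = q)
    (hβ₂ : ∃ q : ℚ, β₂ / Real.pi = q) (hβ₃ : ∃ q : ℚ, β₃ / Real.pi = q)
    (h : ∃ lam : ℂ, lam ≠ 0 ∧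
      Zm α₁ * Xm α₂ * Zm α₃ = lam • (Xm β₁ * Zm β₂ * Xm β₃)) :
    (Cong α₁ 0 ∨ Cong α₁ Real.pi ∨ Cong α₂ 0 ∨ Cong α₂ Real.pi ∨
     Cong α₃ 0 ∨ Cong α₃ Real.pi ∨ Cong β₁ 0 ∨ Cong β₁ Real.pi ∨
     Cong β₂ 0 ∨ Cong β₂ Real.pi ∨ Cong β₃ 0 ∨ Cong β₃ Real.pi) ∨
    ((HalfPi α₁ ∧ HalfPi α₂) ∨ (HalfPi α₂ ∧ HalfPi α₃) ∨
     (HalfPi α₃ ∧ HalfPi β₃) ∨ (HalfPi α₁ ∧ HalfPi β₁) ∨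
     (HalfPi β₁ ∧ HalfPi β₂) ∨ (HalfPi β₂ ∧ HalfPi β₃)) := by
  obtain ⟨l, hl, h⟩ := h
  have E1 := euler_cos hl h
  have E2 := euler_cos (inv_ne_zero hl) (euler_swap hl h)
  obtain ⟨V, -, h2⟩ := exists_val2
  by_cases hc : (Cong α₁ 0 ∨ Cong α₁ Real.pi ∨ Cong α₂ 0 ∨ Cong α₂ Real.pi ∨
     Cong α₃ 0 ∨ Cong α₃ Real.pi ∨ Cong β₁ 0 ∨ Cong β₁ Real.pi ∨
     Cong β₂ 0 ∨ Cong β₂ Real.pi ∨ Cong β₃ 0 ∨ Cong β₃ Real.pi)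
  · exact Or.inl hc
  right
  simp only [not_or] at hc
  obtain ⟨n1, n2, n3, n4, n5, n6, n7, n8, n9, n10, n11, n12⟩ := hc
  generalize V.valuation = v at h2
  have A1 := val_trig v h2 hα₁ n1 n2
  have A2 := val_trig v h2 hα₂ n3 n4
  have A3 := val_trig v h2 hα₃ n5 n6
  have B1 := val_trig v h2 hβ₁ n7 n8
  have B2 := val_trig v h2 hβ₂ n9 n10
  have B3 := val_trig v h2 hβ₃ n11 n12
  have weak : ∀ t : ℝ, ((HalfPi t ∧ Complex.cos t = 0 ∧ v (Complex.sin t) = 1) ∨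
      (1 < v (Complex.cos t) ∧ v (Complex.sin t) = v (Complex.cos t))) →
      v (Complex.cos t) ≤ v (Complex.sin t) ∧ 1 ≤ v (Complex.sin t) := by
    rintro t (⟨_, h, h'⟩ | ⟨h, h'⟩)
    · rw [h, h']; simp
    · rw [h']; exact ⟨le_rfl, h.le⟩
  obtain ⟨a1, a1'⟩ := weak _ A1
  obtain ⟨a3, a3'⟩ := weak _ A3
  obtain ⟨b1, b1'⟩ := weak _ B1
  obtain ⟨b3, b3'⟩ := weak _ B3
  have F1 := val_step v E1 b1 b3 b1' b3'
  have F2 := val_step v E2 a1 a3 a1' a3'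
  have key : 1 < v (Complex.cos α₂) → 1 < v (Complex.cos β₂) → HalfPi α₁ ∧ HalfPi β₁ := by
    intro hα hβ
    have f1 := F1 hβ
    have f2 := F2 hα
    have g1 : v (Complex.sin β₁) * v (Complex.cos β₂) ≤ v (Complex.cos α₂) := by
      rw [f1]; exact mul_le_mul' (le_mul_of_one_le_right' b3') le_rfl
    have g2 : v (Complex.sin α₁) * v (Complex.cos α₂) ≤ v (Complex.cos β₂) := by
      rw [f2]; exact mul_le_mul' (le_mul_of_one_le_right' a3') le_rfl
    have g1' : v (Complex.cos β₂) ≤ v (Complex.cos α₂) :=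
      (le_mul_of_one_le_left' b1').trans g1
    have g2' : v (Complex.cos α₂) ≤ v (Complex.cos β₂) :=
      (le_mul_of_one_le_left' a1').trans g2
    have pα : 0 < v (Complex.cos α₂) := zero_lt_one.trans hα
    have pβ : 0 < v (Complex.cos β₂) := zero_lt_one.trans hβ
    constructor
    · rcases A1 with h | ⟨h, h'⟩
      · exact h.1
      · rw [← h'] at h
        exact absurd (g2.trans g1') (not_le.2 (lt_mul_of_one_lt_left pα h))
    · rcases B1 with h | ⟨h, h'⟩
      · exact h.1
      · rw [← h'] at h
        exact absurd (g1.trans g2') (not_le.2 (lt_mul_of_one_lt_left pβ h))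
  rcases A2 with ⟨hA, cA, -⟩ | ⟨hA, -⟩ <;> rcases B2 with ⟨hB, cB, -⟩ | ⟨hB, -⟩
  · rw [cA, cB, mul_zero, sub_zero] at E2
    rcases mul_eq_zero.1 E2.symm with h0 | h0
    · rcases A1 with h | ⟨h, _⟩
      · exact Or.inl ⟨h.1, hA⟩
      · simp [h0] at h
    · rcases A3 with h | ⟨h, _⟩
      · exact Or.inr (Or.inl ⟨hA, h.1⟩)
      · simp [h0] at h
  · have f1 := F1 hB
    have : 1 < v (Complex.cos α₂) := by
      rw [f1]; exact hB.trans_le (le_mul_of_one_le_left' (one_le_mul b1' b3'))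
    simp [cA] at this
  · have f2 := F2 hA
    have : 1 < v (Complex.cos β₂) := by
      rw [f2]; exact hA.trans_le (le_mul_of_one_le_left' (one_le_mul a1' a3'))
    simp [cB] at this
  · exact Or.inr (Or.inr (Or.inr (Or.inl (key hA hB))))
end

section
/- Let m ≥ 1 and let y be a point of the m-dimensional torus T^m = (ℝ/2πℤ)^m. Then the topological closure of the set {k·y : k ∈ ℕ} in T^m is a finite union of sets of the form ℓ_i + F(T^m), i ∈ I with I finite, where F : T^m → T^m is the endomorphism of T^m induced by a single m×m integer matrix and each ℓ_i ∈ T^m has all coordinates in 2πℚ (mod 2πℤ). -/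
open MeasureTheory Filter Topology UnitAddTorus

lemma qt_mFourier_add {d : Type*} [Fintype d] (n : d → ℤ) (x y : UnitAddTorus d) :
    mFourier n (x + y) = mFourier n x * mFourier n y := by
  simp only [mFourier, ContinuousMap.coe_mk, ← Finset.prod_mul_distrib, fourier_apply,
    Pi.add_apply, smul_add, AddCircle.toCircle_add, Circle.coe_mul]

lemma qt_mFourier_nsmul {d : Type*} [Fintype d] (n : d → ℤ) (x : UnitAddTorus d) (k : ℕ) :
    mFourier n (k • x) = mFourier n x ^ k := by
  induction k with
  | zero => simp [mFourier]
  | succ k ih => rw [succ_nsmul, qt_mFourier_add, ih, pow_succ]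

lemma qt_avg {d : Type*} [Fintype d] (θ : UnitAddTorus d)
    (μ : Measure (UnitAddTorus d)) [μ.IsAddHaarMeasure] [IsProbabilityMeasure μ]
    (h : ∀ n : d → ℤ, n ≠ 0 → mFourier n θ ≠ 1) (p : C(UnitAddTorus d, ℂ))
    (hp : p ∈ Submodule.span ℂ (Set.range (mFourier (d := d)))) :
    Tendsto (fun N : ℕ => (N : ℂ)⁻¹ * ∑ k ∈ Finset.range N, p (k • θ)) atTop (𝓝 (∫ x, p x ∂μ)) := by
  have hint : ∀ f : C(UnitAddTorus d, ℂ), Integrable f μ := fun f =>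
    f.continuous.integrable_of_hasCompactSupport (HasCompactSupport.of_compactSpace f)
  induction hp using Submodule.span_induction with
  | mem x hx =>
    obtain ⟨n, rfl⟩ := hx
    by_cases hn : n = 0
    · subst hn
      simp only [mFourier_zero, ContinuousMap.one_apply]
      simp only [Finset.sum_const, Finset.card_range, nsmul_eq_mul, mul_one, integral_const,
        probReal_univ, one_smul]
      apply tendsto_const_nhds.congr'
      filter_upwards [eventually_ge_atTop 1] with N hN
      rw [inv_mul_cancel₀]
      exact_mod_cast (by omega : N ≠ 0)
    · have h1 := h n hn
      have h0 : ∫ x, mFourier n x ∂μ = 0 := by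
        have := integral_add_right_eq_self (μ := μ) (fun x => mFourier n x) θ
        simp only [qt_mFourier_add] at this
        rw [integral_mul_const] at this
        have h3 : (∫ x, mFourier n x ∂μ) * (mFourier n θ - 1) = 0 := by
          rw [mul_sub, this]; ring
        rcases mul_eq_zero.1 h3 with h4 | h4
        · exact h4
        · exact absurd (sub_eq_zero.1 h4) h1
      rw [h0]
      have hb : ∀ k : ℕ, ‖mFourier n θ ^ k‖ ≤ 1 := fun k => by
        rw [← qt_mFourier_nsmul]
        exact ((mFourier n).norm_coe_le_norm _).trans mFourier_norm.le
      simp only [qt_mFourier_nsmul, geom_sum_eq h1]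
      have hz : Tendsto (fun N : ℕ => (N : ℂ)⁻¹) atTop (𝓝 0) := tendsto_inv_atTop_nhds_zero_nat
      apply hz.zero_mul_isBoundedUnder_le
      refine ⟨2 / ‖mFourier n θ - 1‖, ?_⟩
      simp only [eventually_map, Function.comp]
      filter_upwards with N
      rw [norm_div]
      gcongr
      refine (norm_sub_le _ _).trans ?_
      have := hb N
      rw [norm_one]; linarith
  | zero => simp
  | add f g _ _ hf hg =>
    simp only [ContinuousMap.add_apply, Finset.sum_add_distrib, mul_add]
    rw [integral_add (hint f) (hint g)]
    exact hf.add hg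
  | smul a f _ hf =>
    simp only [ContinuousMap.smul_apply, smul_eq_mul, ← Finset.mul_sum]
    rw [integral_const_mul]
    exact (hf.const_mul a).congr fun N => by ring

lemma qt_dense {d : Type*} [Fintype d] (θ : UnitAddTorus d)
    (h : ∀ n : d → ℤ, n ≠ 0 → mFourier n θ ≠ 1) : DenseRange (fun k : ℕ => k • θ) := by
  let μ : Measure (UnitAddTorus d) := Measure.pi (fun _ => AddCircle.haarAddCircle)
  have : μ.IsAddHaarMeasure := by
    show Measure.IsAddHaarMeasure (Measure.pi (fun _ => AddCircle.haarAddCircle))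
    infer_instance
  have : IsProbabilityMeasure μ := by
    show IsProbabilityMeasure (Measure.pi (fun _ => AddCircle.haarAddCircle))
    infer_instance
  have hint : ∀ f : C(UnitAddTorus d, ℂ), Integrable f μ := fun f =>
    f.continuous.integrable_of_hasCompactSupport (HasCompactSupport.of_compactSpace f)
  set S := Set.range (fun k : ℕ => k • θ) with hS
  have hne : S.Nonempty := Set.range_nonempty _
  let g : UnitAddTorus d → ℝ := fun x => Metric.infDist x S
  have hg : Continuous g := Metric.continuous_infDist_pt S
  let f : C(UnitAddTorus d, ℂ) := ⟨fun x => (g x : ℂ), by fun_prop⟩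
  have hf0 : ∀ k : ℕ, f (k • θ) = 0 := fun k => by
    have : g (k • θ) = 0 := Metric.infDist_zero_of_mem ⟨k, rfl⟩
    show ((g (k • θ) : ℝ) : ℂ) = 0
    rw [this]; rfl
  have key : ∫ x, f x ∂μ = 0 := by
    rw [← norm_le_zero_iff]
    apply le_of_forall_pos_le_add
    intro ε hε
    have hmem : f ∈ (Submodule.span ℂ (Set.range (mFourier (d := d)))).topologicalClosure := by
      rw [span_mFourier_closure_eq_top]; trivial
    obtain ⟨p, hp, hfp⟩ := Metric.mem_closure_iff.1 hmem (ε / 2) (half_pos hε)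
    rw [dist_eq_norm] at hfp
    have hpt : ∀ x, ‖f x - p x‖ ≤ ε / 2 := fun x => ((f - p).norm_coe_le_norm x).trans hfp.le
    have h1 : ‖∫ x, p x ∂μ‖ ≤ ε / 2 := by
      refine le_of_tendsto (qt_avg θ μ h p hp).norm (Eventually.of_forall fun N => ?_)
      rw [norm_mul, norm_inv, Complex.norm_natCast]
      have : ‖∑ k ∈ Finset.range N, p (k • θ)‖ ≤ N * (ε / 2) := by
        have h3 : ∀ k ∈ Finset.range N, ‖p (k • θ)‖ ≤ ε / 2 := fun k _ => by
          have := hpt (k • θ)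
          rwa [hf0, zero_sub, norm_neg] at this
        have h4 := norm_sum_le_of_le (Finset.range N) h3
        simpa using h4
      rcases Nat.eq_zero_or_pos N with rfl | hN
      · simp; positivity
      · have hN' : (0 : ℝ) < N := by exact_mod_cast hN
        rw [inv_mul_le_iff₀ hN']
        exact this
    have h2 : ‖∫ x, (f x - p x) ∂μ‖ ≤ ε / 2 := by
      have := norm_integral_le_of_norm_le_const (μ := μ) (Eventually.of_forall hpt)
      simpa using this
    rw [integral_sub (hint f) (hint p)] at h2
    have := norm_add_le (∫ x, f x ∂μ - ∫ x, p x ∂μ) (∫ x, p x ∂μ)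
    rw [sub_add_cancel] at this
    linarith
  have key2 : ∫ x, g x ∂μ = 0 := by
    have : ∫ x, f x ∂μ = ((∫ x, g x ∂μ : ℝ) : ℂ) := integral_ofReal
    rw [this] at key
    exact_mod_cast key
  have hgi : Integrable g μ :=
    hg.integrable_of_hasCompactSupport (HasCompactSupport.of_compactSpace g)
  rw [integral_eq_zero_iff_of_nonneg (fun x => Metric.infDist_nonneg) hgi] at key2
  have hg0 : g = 0 := (hg.ae_eq_iff_eq μ continuous_zero).1 key2
  intro x
  rw [Metric.mem_closure_iff_infDist_zero hne]
  exact congrFun hg0 x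

lemma qt_mFourier_ne_one {d : Type*} [Fintype d] (θ : d → ℝ) (n : d → ℤ)
    (h : ∀ z : ℤ, ∑ k, (n k : ℝ) * θ k ≠ z) :
    mFourier n (fun k => (θ k : UnitAddCircle)) ≠ 1 := by
  intro h1
  simp only [mFourier, ContinuousMap.coe_mk] at h1
  have h2 : ∀ k, fourier (n k) ((θ k : ℝ) : UnitAddCircle) =
      Complex.exp (2 * Real.pi * Complex.I * n k * θ k) := fun k => by
    rw [fourier_coe_apply]; simp
  simp only [h2] at h1
  rw [← Complex.exp_sum, Complex.exp_eq_one_iff] at h1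
  obtain ⟨z, hz⟩ := h1
  apply h z
  have hp : (2 * Real.pi * Complex.I : ℂ) ≠ 0 := Complex.two_pi_I_ne_zero
  have : (2 * Real.pi * Complex.I : ℂ) * (∑ k, (n k : ℂ) * θ k) = 2 * Real.pi * Complex.I * z := by
    rw [mul_comm _ (z : ℂ), ← hz, Finset.mul_sum]
    exact Finset.sum_congr rfl fun k _ => by ring
  have := mul_left_cancel₀ hp this
  exact_mod_cast this

lemma qt_basis (m : ℕ) (x : Fin m → ℝ) :
    ∃ (κ : Type) (_ : Fintype κ) (a : κ → Fin m) (N : ℕ) (C : Fin m → κ → ℤ) (q : Fin m → ℤ)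
      (θ : κ → ℝ), Function.Injective a ∧ 0 < N ∧
      (∀ j, x j = q j / N + ∑ k, (C j k : ℝ) * θ k) ∧
      ∀ n : κ → ℤ, n ≠ 0 → ∀ z : ℤ, ∑ k, (n k : ℝ) * θ k ≠ z := by
  let W : Submodule ℚ ℝ := Submodule.span ℚ {1}
  let v : Fin m → ℝ ⧸ W := fun j => W.mkQ (x j)
  obtain ⟨κ, a, ha, hsp, hli⟩ := exists_linearIndependent' ℚ v
  have : Fintype κ := Fintype.ofInjective a ha
  have hx : ∀ j, ∃ (r : ℚ) (c : κ → ℚ), x j = r + ∑ k, (c k : ℝ) * x (a k) := by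
    intro j
    have hj : v j ∈ Submodule.span ℚ (Set.range (v ∘ a)) := by
      rw [hsp]; exact Submodule.subset_span ⟨j, rfl⟩
    obtain ⟨c, hc⟩ := (Submodule.mem_span_range_iff_exists_fun ℚ).1 hj
    have h1 : W.mkQ (x j - ∑ k, c k • x (a k)) = 0 := by
      rw [map_sub, map_sum]
      simp only [map_smul]
      exact sub_eq_zero.2 hc.symm
    rw [Submodule.mkQ_apply, Submodule.Quotient.mk_eq_zero] at h1
    obtain ⟨r, hr⟩ := Submodule.mem_span_singleton.1 h1
    refine ⟨r, c, ?_⟩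
    simp only [Rat.smul_def, mul_one] at hr
    rw [hr]; ring
  choose r c hrc using hx
  obtain ⟨b, hb⟩ := IsLocalization.exist_integer_multiples_of_finite (nonZeroDivisors ℤ)
    (fun i : Fin m ⊕ (Fin m × κ) => Sum.elim r (fun p => c p.1 p.2) i)
  have hb0 : (b : ℤ) ≠ 0 := nonZeroDivisors.coe_ne_zero b
  -- natural common denominator
  let N : ℕ := (b : ℤ).natAbs
  have hN : 0 < N := Int.natAbs_pos.2 hb0
  have hN' : (N : ℝ) ≠ 0 := by exact_mod_cast hN.ne'
  have hint : ∀ i, ∃ z : ℤ, (z : ℚ) = N * Sum.elim r (fun p : Fin m × κ => c p.1 p.2) i := by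
    intro i
    obtain ⟨z, hz⟩ := hb i
    have hz' : (z : ℚ) = ((b : ℤ) : ℚ) * Sum.elim r (fun p : Fin m × κ => c p.1 p.2) i := by
      simpa [Algebra.smul_def] using hz
    rcases Int.natAbs_eq (b : ℤ) with h | h
    · refine ⟨z, ?_⟩
      rw [hz', h]; simp [N]
    · refine ⟨-z, ?_⟩
      push_cast
      rw [hz', h]; simp [N]
  have hq : ∀ j, ∃ z : ℤ, (z : ℝ) = N * r j := fun j => by
    obtain ⟨z, hz⟩ := hint (Sum.inl j)
    exact ⟨z, by simp only [Sum.elim_inl] at hz; exact_mod_cast hz⟩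
  have hC : ∀ j k, ∃ z : ℤ, (z : ℝ) = N * c j k := fun j k => by
    obtain ⟨z, hz⟩ := hint (Sum.inr (j, k))
    exact ⟨z, by simp only [Sum.elim_inr] at hz; exact_mod_cast hz⟩
  choose q hq using hq
  choose C hC using hC
  refine ⟨κ, inferInstance, a, N, C, q, fun k => x (a k) / N, ha, hN, fun j => ?_, ?_⟩
  · rw [hq, mul_div_cancel_left₀ _ hN']
    conv_lhs => rw [hrc j]
    congr 1
    refine Finset.sum_congr rfl fun k _ => ?_
    rw [hC]; field_simp
  · intro n hn z hz
    apply hn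
    have h1 : ∑ k, (n k : ℚ) • (v ∘ a) k = 0 := by
      have h2 : ∑ k, (n k : ℚ) • x (a k) ∈ W := by
        refine Submodule.mem_span_singleton.2 ⟨(N * z : ℚ), ?_⟩
        simp only [Rat.smul_def, mul_one]
        push_cast
        rw [← hz, Finset.mul_sum]
        refine Finset.sum_congr rfl fun k _ => ?_
        field_simp
      have h3 := (Submodule.Quotient.mk_eq_zero W).2 h2
      rw [← Submodule.mkQ_apply, map_sum] at h3
      simp only [map_smul] at h3
      exact h3
    have h4 := Fintype.linearIndependent_iff.1 hli _ h1
    funext k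
    exact_mod_cast h4 k

lemma qt_closure_range {X Y ι : Type*} [TopologicalSpace X] [CompactSpace X] [TopologicalSpace Y]
    [T2Space Y] (g : X → Y) (hg : Continuous g) (s : ι → X) (hs : DenseRange s) :
    closure (Set.range (fun i => g (s i))) = Set.range g := by
  apply Set.Subset.antisymm
  · apply closure_minimal
    · rintro _ ⟨i, rfl⟩; exact ⟨_, rfl⟩
    · exact (isCompact_range hg).isClosed
  · have := hg.range_subset_closure_image_dense hs
    rwa [← Set.range_comp] at this

theorem closure_of_monoid_is_quasi_torus (m : ℕ) (hm : 1 ≤ m)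
    (y : Fin m → AddCircle (2 * Real.pi)) :
    ∃ (A : Matrix (Fin m) (Fin m) ℤ) (t : ℕ)
      (ℓ : Fin t → (Fin m → AddCircle (2 * Real.pi))),
      (∀ (i : Fin t) (j : Fin m), ∃ q : ℚ,
        ℓ i j = ((2 * Real.pi * (q : ℝ) : ℝ) : AddCircle (2 * Real.pi))) ∧
      closure {z : Fin m → AddCircle (2 * Real.pi) | ∃ k : ℕ, z = k • y} =
        ⋃ i : Fin t,
          {w : Fin m → AddCircle (2 * Real.pi) |
            ∃ z : Fin m → AddCircle (2 * Real.pi),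
              w = fun j => ℓ i j + ∑ r : Fin m, A j r • z r} := by
  have hpi : (2 * Real.pi) ≠ 0 := by positivity
  have hx : ∀ j, ∃ x : ℝ, ((2 * Real.pi * x : ℝ) : AddCircle (2 * Real.pi)) = y j := fun j => by
    obtain ⟨x, hx⟩ := QuotientAddGroup.mk_surjective (y j)
    refine ⟨x / (2 * Real.pi), ?_⟩
    rw [mul_div_cancel₀ _ hpi]; exact hx
  choose x hx using hx
  obtain ⟨κ, _, a, N, C, q, θ, ha, hN, hxq, hind⟩ := qt_basis m x
  have hN' : (N : ℝ) ≠ 0 := by exact_mod_cast hN.ne'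
  classical
  let e : UnitAddCircle ≃+ AddCircle (2 * Real.pi) :=
    AddCircle.equivAddCircle 1 (2 * Real.pi) one_ne_zero hpi
  have he : Continuous e :=
    (AddCircle.homeomorphAddCircle 1 (2 * Real.pi) one_ne_zero hpi).continuous
  have hes : ∀ u : ℝ, e (u : UnitAddCircle) = ((2 * Real.pi * u : ℝ) : AddCircle (2 * Real.pi)) := by
    intro u
    show e ((u : ℝ) : AddCircle (1 : ℝ)) = _
    rw [AddCircle.equivAddCircle_apply_mk]
    congr 1; ring
  let Θ : UnitAddTorus κ := fun k => (θ k : UnitAddCircle)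
  let Q : Fin m → AddCircle (2 * Real.pi) :=
    fun j => ((2 * Real.pi * (q j / N : ℝ) : ℝ) : AddCircle (2 * Real.pi))
  let Φ : UnitAddTorus κ →+ (Fin m → AddCircle (2 * Real.pi)) :=
    { toFun := fun z j => ∑ k, C j k • e (z k)
      map_zero' := by funext j; simp
      map_add' := fun z w => by funext j; simp [Finset.sum_add_distrib] }
  have hΦc : Continuous Φ := by
    show Continuous (fun (z : UnitAddTorus κ) j => ∑ k, C j k • e (z k))
    fun_prop
  have hy : y = Q + Φ Θ := by
    funext j
    show y j = Q j + ∑ k, C j k • e (Θ k)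
    simp only [Θ, Q, hes]
    rw [← hx j, hxq j, mul_add, AddCircle.coe_add, Finset.mul_sum]
    congr 1
    simp only [← AddCircle.coe_zsmul]
    rw [← QuotientAddGroup.mk_sum]
    congr 1
    refine Finset.sum_congr rfl fun k _ => ?_
    rw [zsmul_eq_mul]; ring
  have hNQ : N • Q = 0 := by
    funext j
    show N • Q j = 0
    simp only [Q]
    rw [← AddCircle.coe_nsmul, AddCircle.coe_eq_zero_iff]
    refine ⟨q j, ?_⟩
    rw [zsmul_eq_mul, nsmul_eq_mul]; field_simp
  have hdense : ∀ i : ℕ, DenseRange (fun n : ℕ => (i + N * n) • Θ) := by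
    intro i
    have h1 : DenseRange (fun n : ℕ => n • (N • Θ)) := by
      apply qt_dense
      intro n hn
      rw [qt_mFourier_nsmul]
      have h2 : mFourier (fun k => (N : ℤ) * n k) Θ ≠ 1 := by
        apply qt_mFourier_ne_one
        apply hind
        intro h0
        apply hn
        funext k
        have := congrFun h0 k
        simp only [Pi.zero_apply, mul_eq_zero, Nat.cast_eq_zero, hN.ne', false_or] at this
        exact this
      convert h2 using 1
      simp only [mFourier, ContinuousMap.coe_mk, fourier_apply, ← Finset.prod_pow]
      refine Finset.prod_congr rfl fun k _ => ?_
      rw [mul_zsmul, natCast_zsmul, AddCircle.toCircle_nsmul, Circle.coe_pow]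
    have h3 : DenseRange ((fun w => i • Θ + w) ∘ (fun n : ℕ => n • (N • Θ))) :=
      (add_left_surjective (i • Θ)).denseRange.comp h1 (by fun_prop)
    convert h3 using 2 with n
    simp only [Function.comp]
    rw [add_smul, mul_comm, mul_smul]
  refine ⟨fun j r => ∑ k, if a k = r then C j k else 0, N, fun i => (i : ℕ) • Q, ?_, ?_⟩
  · intro i j
    refine ⟨(i : ℕ) * (q j / N), ?_⟩
    show (i : ℕ) • Q j = _
    simp only [Q]
    rw [← AddCircle.coe_nsmul]
    congr 1
    push_cast
    rw [nsmul_eq_mul]; ring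
  · have hU : {z : Fin m → AddCircle (2 * Real.pi) | ∃ k : ℕ, z = k • y} =
        ⋃ i : Fin N, Set.range (fun n : ℕ => (i : ℕ) • Q + Φ (((i : ℕ) + N * n) • Θ)) := by
      have hf : ∀ i n : ℕ, i • Q + Φ ((i + N * n) • Θ) = (i + N * n) • y := by
        intro i n
        rw [hy, smul_add, map_nsmul, add_smul i (N * n) Q, mul_comm N n, mul_smul n N Q, hNQ,
          smul_zero, add_zero]
      ext z
      simp only [Set.mem_ofPred_eq, Set.mem_iUnion, Set.mem_range, hf]
      constructor
      · rintro ⟨k, rfl⟩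
        exact ⟨⟨k % N, Nat.mod_lt _ hN⟩, k / N, by simp only [Nat.mod_add_div]⟩
      · rintro ⟨i, n, rfl⟩
        exact ⟨_, rfl⟩
    rw [hU, closure_iUnion_of_finite]
    refine Set.iUnion_congr fun i => ?_
    rw [qt_closure_range (fun w => (i : ℕ) • Q + Φ w) (by fun_prop) _ (hdense i)]
    have hsum : ∀ (z : Fin m → AddCircle (2 * Real.pi)) (j : Fin m),
        ∑ r : Fin m, (∑ k, if a k = r then C j k else 0) • z r = ∑ k, C j k • z (a k) := by
      intro z j
      simp only [Finset.sum_smul]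
      rw [Finset.sum_comm]
      refine Finset.sum_congr rfl fun k _ => ?_
      simp [ite_smul]
    ext w
    simp only [Set.mem_range, Set.mem_ofPred_eq, hsum]
    constructor
    · rintro ⟨u, rfl⟩
      obtain ⟨z, hz⟩ := ha.surjective_comp_right (fun k => e (u k))
      refine ⟨z, ?_⟩
      funext j
      show (i : ℕ) • Q j + ∑ k, C j k • e (u k) = (i : ℕ) • Q j + ∑ k, C j k • z (a k)
      congr 1
      exact Finset.sum_congr rfl fun k _ => by rw [← congrFun hz k]; rfl
    · rintro ⟨z, rfl⟩
      refine ⟨fun k => e.symm (z (a k)), ?_⟩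
      funext j
      show (i : ℕ) • Q j + ∑ k, C j k • e (e.symm (z (a k))) = (i : ℕ) • Q j + ∑ k, C j k • z (a k)
      simp
end

section
/- Let m ≥ 1 and let P₁, …, P_s be polynomials in m variables with complex coefficients. Let (x^{(i)})_{i ∈ ℕ} be a sequence of vectors in ℝ^m, each of whose coordinates is a rational multiple of π, converging to x ∈ ℝ^m, and suppose that for every i and every j ∈ {1, …, s}, P_j(e^{i·x^{(i)}₁}, …, e^{i·x^{(i)}_m}) = 0. Then there exist an m×m integer matrix A, a vector ℓ ∈ ℝ^m all of whose coordinates are rational multiples of π, and a point z₀ ∈ ℝ^m, such that x ≡ A·z₀ + ℓ componentwise modulo 2π, and for every z ∈ ℝ^m and every j, P_j(e^{i(A·z + ℓ)₁}, …, e^{i(A·z + ℓ)_m}) = 0. -/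
open Polynomial in
theorem nextCoeff_cyclotomic_sum (n : ℕ) (hn : 0 < n) :
    ∑ d ∈ n.divisors, (cyclotomic d ℚ).nextCoeff = if n = 1 then -1 else 0 := by
  rw [← Monic.nextCoeff_prod _ _ (fun i _ => cyclotomic.monic i ℚ), prod_cyclotomic_eq_X_pow_sub_one hn]
  have hd : (X ^ n - 1 : ℚ[X]).natDegree = n := by
    simpa using natDegree_X_pow_sub_C (R := ℚ) (n := n) (r := 1)
  rw [nextCoeff, hd, if_neg hn.ne']
  rcases eq_or_ne n 1 with rfl | h
  · simp
  · have h1 : n - 1 ≠ n := by omega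
    have h2 : n - 1 ≠ 0 := by omega
    simp [coeff_X_pow, coeff_one, h, h1, h2]

open Polynomial in
theorem nextCoeff_cyclotomic_abs (n : ℕ) (hn : 0 < n) :
    |(cyclotomic n ℚ).nextCoeff| ≤ 1 := by
  have h := (ArithmeticFunction.sum_eq_iff_sum_mul_moebius_eq
    (f := fun d => (cyclotomic d ℚ).nextCoeff) (g := fun n => if n = 1 then (-1 : ℚ) else 0)).1
    (fun n hn => nextCoeff_cyclotomic_sum n hn) n hn
  rw [← h, Finset.sum_eq_single (n, 1)]
  · have := ArithmeticFunction.abs_moebius_le_one (n := n)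
    simp only [if_true, mul_neg, mul_one, abs_neg]
    exact_mod_cast this
  · rintro ⟨a, b⟩ hab hne
    rw [Nat.mem_divisorsAntidiagonal] at hab
    have : b ≠ 1 := by
      rintro rfl
      apply hne
      simpa using hab.1
    simp [this]
  · intro h
    simp [hn.ne'] at h

theorem totient_le_finite (M : ℕ) : {n : ℕ | 0 < n ∧ n.totient ≤ M}.Finite := by
  refine (Finset.finite_toSet (Nat.divisors (((M + 1).factorial) ^ (M + 1)))).subset ?_
  rintro n ⟨hn, hM⟩
  have h0 : ((M + 1).factorial) ^ (M + 1) ≠ 0 := pow_ne_zero _ (Nat.factorial_ne_zero _)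
  simp only [Finset.mem_coe, Nat.mem_divisors]
  refine ⟨?_, h0⟩
  refine (Nat.dvd_iff_prime_pow_dvd_dvd _ _).2 fun p k hp hpk => ?_
  rcases Nat.eq_zero_or_pos k with rfl | hk
  · simp
  have h1 : (p ^ k).totient ≤ M :=
    (Nat.le_of_dvd (Nat.totient_pos.2 hn) (Nat.totient_dvd_of_dvd hpk)).trans hM
  rw [Nat.totient_prime_pow hp hk] at h1
  have hp2 := hp.two_le
  have h2 : p - 1 ≤ M := le_trans (Nat.le_mul_of_pos_left _ (pow_pos hp.pos _)) h1
  have h3 : p ^ (k - 1) ≤ M := le_trans (Nat.le_mul_of_pos_right _ (by omega)) h1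
  have h4 : k - 1 < p ^ (k - 1) := Nat.lt_pow_self hp.one_lt
  exact (pow_dvd_pow_of_dvd (Nat.dvd_factorial hp.pos (by omega)) k).trans
    (pow_dvd_pow _ (by omega))

theorem normTrace_le {K : Type*} [Field K] [CharZero K] [Algebra ℚ K] [Algebra.IsIntegral ℚ K]
    (z : K) (hz : IsOfFinOrder z) :
    |Algebra.normalizedTrace ℚ K z| ≤ ((orderOf z).totient : ℚ)⁻¹ := by
  have hpos : 0 < orderOf z := hz.orderOf_pos
  have hm : minpoly ℚ z = Polynomial.cyclotomic (orderOf z) ℚ := by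
    rw [Polynomial.cyclotomic_eq_minpoly_rat (IsPrimitiveRoot.orderOf z) hpos]
    congr
    subsingleton
  rw [Algebra.normalizedTrace_minpoly, hm, Polynomial.natDegree_cyclotomic, smul_eq_mul, abs_mul,
    abs_neg, abs_of_nonneg (by positivity)]
  exact mul_le_of_le_one_right (by positivity) (nextCoeff_cyclotomic_abs _ hpos)

/-- Normalized traces of roots of unity leaving each finite set tend to zero. -/
theorem normTrace_tendsto {K : Type*} [Field K] [CharZero K] [Algebra ℚ K]
    [Algebra.IsIntegral ℚ K] (U : Filter ℕ) (w : ℕ → K) (hw : ∀ i, IsOfFinOrder (w i))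
    (hU : ∀ c, ∀ᶠ i in U, w i ≠ c) :
    Filter.Tendsto (fun i => Algebra.normalizedTrace ℚ K (w i)) U (nhds 0) := by
  rw [Metric.tendsto_nhds]
  intro ε hε
  obtain ⟨M, hM⟩ := exists_nat_gt (ε⁻¹)
  have hfin : {z : K | IsOfFinOrder z ∧ (orderOf z).totient ≤ M}.Finite := by
    refine ((totient_le_finite M).biUnion
      (t := fun n => {z : K | 0 < n ∧ z ^ n = 1}) ?_).subset ?_
    · intro n hn
      refine (Finset.finite_toSet (Polynomial.nthRootsFinset n (1 : K))).subset ?_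
      rintro z ⟨_, hz⟩
      simpa [Polynomial.mem_nthRootsFinset hn.1] using hz
    · rintro z ⟨hz, hz'⟩
      simp only [Set.mem_iUnion]
      exact ⟨orderOf z, ⟨hz.orderOf_pos, hz'⟩, hz.orderOf_pos, pow_orderOf_eq_one z⟩
  have hev : ∀ᶠ i in U, ∀ z ∈ {z : K | IsOfFinOrder z ∧ (orderOf z).totient ≤ M}, w i ≠ z :=
    (Filter.eventually_all_finite hfin).2 fun z _ => hU z
  filter_upwards [hev] with i hi
  have h1 : M < (orderOf (w i)).totient := by
    by_contra! h
    exact hi (w i) ⟨hw i, h⟩ rfl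
  have h2 : ε⁻¹ < ((orderOf (w i)).totient : ℝ) := hM.trans (by exact_mod_cast h1)
  have h3 := normTrace_le (w i) (hw i)
  have h4 : |((Algebra.normalizedTrace ℚ K (w i) : ℚ) : ℝ)| ≤
      ((orderOf (w i)).totient : ℝ)⁻¹ := by 
    have h5 : ((|Algebra.normalizedTrace ℚ K (w i)| : ℚ) : ℝ) ≤
        ((((orderOf (w i)).totient : ℚ)⁻¹ : ℚ) : ℝ) := Rat.cast_le.2 h3
    rwa [Rat.cast_abs, Rat.cast_inv, Rat.cast_natCast] at h5
  rw [dist_zero_right, ← Rat.norm_cast_real, Real.norm_eq_abs]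
  exact h4.trans_lt (inv_lt_of_inv_lt₀ hε h2)

noncomputable abbrev TorField : IntermediateField ℚ ℂ :=
  IntermediateField.adjoin ℚ (CommMonoid.torsion ℂ : Set ℂ)

theorem tor_integral (z : ℂ) (hz : IsOfFinOrder z) : IsIntegral ℚ z :=
  (IsPrimitiveRoot.isIntegral (IsPrimitiveRoot.orderOf z) hz.orderOf_pos).tower_top

instance : Algebra.IsIntegral ℚ TorField :=
  (IntermediateField.isAlgebraic_adjoin fun z hz => tor_integral z hz).isIntegral

theorem torField_span (z : ℂ) (hz : z ∈ TorField) :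
    z ∈ Submodule.span ℚ (CommMonoid.torsion ℂ : Set ℂ) := by
  have h : z ∈ TorField.toSubalgebra := hz
  rw [IntermediateField.adjoin_toSubalgebra_of_isAlgebraic
    (S := (CommMonoid.torsion ℂ : Set ℂ)) fun z hz => (tor_integral z hz).isAlgebraic] at h
  have h' : z ∈ Subalgebra.toSubmodule (Algebra.adjoin ℚ (CommMonoid.torsion ℂ : Set ℂ)) := h
  rwa [Algebra.adjoin_eq_span, Submonoid.closure_eq] at h'

theorem normTrace_mul_tendsto (U : Filter ℕ) (w : ℕ → TorField) (hw : ∀ i, IsOfFinOrder (w i))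
    (hU : ∀ c, ∀ᶠ i in U, w i ≠ c) (κ : TorField) :
    Filter.Tendsto (fun i => Algebra.normalizedTrace ℚ TorField (κ * w i)) U (nhds 0) := by
  obtain ⟨k, hk⟩ := κ
  have := torField_span k hk
  suffices H : ∀ z ∈ Submodule.span ℚ (CommMonoid.torsion ℂ : Set ℂ), ∃ hz : z ∈ TorField,
    Filter.Tendsto (fun i => Algebra.normalizedTrace ℚ TorField (⟨z, hz⟩ * w i)) U (nhds 0) by
    exact (H k this).2
  intro z hz
  induction hz using Submodule.span_induction with
  | mem u hu =>
    refine ⟨IntermediateField.subset_adjoin _ _ hu, ?_⟩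
    have hu0 : IsOfFinOrder u := hu
    have hu' : IsOfFinOrder (⟨u, IntermediateField.subset_adjoin _ _ hu⟩ : TorField) := by
      rw [isOfFinOrder_iff_pow_eq_one] at hu0 ⊢
      obtain ⟨n, hn, h⟩ := hu0
      exact ⟨n, hn, Subtype.ext h⟩
    apply normTrace_tendsto
    · intro i
      exact hu'.mul (hw i)
    · intro c
      have hne : (⟨u, IntermediateField.subset_adjoin _ _ hu⟩ : TorField) ≠ 0 := by
        intro h
        rw [h, isOfFinOrder_iff_pow_eq_one] at hu'
        obtain ⟨n, hn, h⟩ := hu'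
        simp [hn.ne'] at h
      filter_upwards [hU ((⟨u, IntermediateField.subset_adjoin _ _ hu⟩ : TorField)⁻¹ * c)] with i hi h
      apply hi
      rw [← h, inv_mul_cancel_left₀ hne]
  | zero =>
    refine ⟨zero_mem _, ?_⟩
    have : (⟨0, zero_mem _⟩ : TorField) = 0 := rfl
    simpa [this] using tendsto_const_nhds
  | add a b _ _ ha hb =>
    obtain ⟨ha, ha'⟩ := ha
    obtain ⟨hb, hb'⟩ := hb
    refine ⟨add_mem ha hb, ?_⟩
    have : (⟨a + b, add_mem ha hb⟩ : TorField) = ⟨a, ha⟩ + ⟨b, hb⟩ := rfl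
    simp_rw [this, add_mul, map_add]
    simpa only [add_zero] using ha'.add hb'
  | smul q a _ ha =>
    obtain ⟨ha, ha'⟩ := ha
    refine ⟨TorField.smul_mem ha, ?_⟩
    have : (⟨q • a, TorField.smul_mem ha⟩ : TorField) = q • ⟨a, ha⟩ := rfl
    simp_rw [this, smul_mul_assoc, map_smul, smul_eq_mul]
    simpa only [mul_zero] using ha'.const_mul q

theorem key_sum {ι : Type*} (U : Filter ℕ) [U.NeBot] (S T : Finset ι) (hTS : T ⊆ S)
    (p : ι → ℂ) (w : ι → ℕ → ℂ) (c : ι → ℂ) (hw : ∀ b i, IsOfFinOrder (w b i))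
    (hsum : ∀ i, ∑ b ∈ S, p b * w b i = 0)
    (hT : ∀ b ∈ T, ∀ᶠ i in U, w b i = c b)
    (hnT : ∀ b ∈ S, b ∉ T → ∀ d, ∀ᶠ i in U, w b i ≠ d) :
    ∑ b ∈ T, p b * c b = 0 := by
  classical
  rw [← Module.forall_dual_apply_eq_zero_iff TorField]
  intro f
  by_contra hne
  set Y := f (∑ b ∈ T, p b * c b) with hY
  have hmem : ∀ b i, w b i ∈ TorField := fun b i => IntermediateField.subset_adjoin _ _ (hw b i)
  let W : ι → ℕ → TorField := fun b i => ⟨w b i, hmem b i⟩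
  have hfw : ∀ a b i, f (a * w b i) = f a * W b i := by
    intro a b i
    have : a * w b i = W b i • a := by
      rw [mul_comm]; rfl
    rw [this, map_smul, smul_eq_mul, mul_comm]
  have hW : ∀ b i, IsOfFinOrder (W b i) := by
    intro b i
    have := hw b i
    rw [isOfFinOrder_iff_pow_eq_one] at this ⊢
    obtain ⟨n, hn, h⟩ := this
    exact ⟨n, hn, Subtype.ext h⟩
  have h0 : ∀ i, ∑ b ∈ S, Algebra.normalizedTrace ℚ TorField (Y⁻¹ * f (p b) * W b i) = 0 := by
    intro i
    rw [← map_sum]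
    simp_rw [mul_assoc, ← hfw]
    rw [← Finset.mul_sum, ← map_sum, hsum]
    simp
  have h1 : Filter.Tendsto
      (fun i => ∑ b ∈ S, Algebra.normalizedTrace ℚ TorField (Y⁻¹ * f (p b) * W b i)) U
      (nhds (∑ b ∈ S, if b ∈ T then
        Algebra.normalizedTrace ℚ TorField (Y⁻¹ * f (p b * c b)) else 0)) := by
    refine tendsto_finsetSum _ fun b hb => ?_
    split_ifs with hbT
    · refine tendsto_const_nhds.congr' ?_
      filter_upwards [hT b hbT] with i hi
      rw [mul_assoc, ← hfw, hi]
    · apply normTrace_mul_tendsto _ _ (hW b)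
      intro d
      filter_upwards [hnT b hb hbT d] with i hi h
      exact hi (congrArg Subtype.val h)
  simp_rw [h0] at h1
  have h2 := tendsto_nhds_unique tendsto_const_nhds h1
  rw [← Finset.sum_filter, Finset.filter_mem_eq_inter, Finset.inter_eq_right.2 hTS, ← map_sum,
    ← Finset.mul_sum, ← map_sum, ← hY, inv_mul_cancel₀ hne] at h2
  have h3 := Algebra.normalizedTrace_algebraMap_apply_eq_self ℚ TorField 1
  rw [map_one] at h3
  rw [h3] at h2
  exact zero_ne_one h2

theorem exists_square_proj (m : ℕ) (y : Fin m → ℝ) :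
    ∃ (B : Fin m → Fin m → ℚ), (∀ t, y t = ∑ r, (B t r : ℝ) * y r) ∧
      ∀ k : Fin m → ℚ, ∑ t, (k t : ℝ) * y t = 0 → ∀ r, ∑ t, k t * B t r = 0 := by
  let φ : (Fin m → ℚ) →ₗ[ℚ] ℝ := Fintype.linearCombination ℚ y
  have hφ : ∀ k, φ k = ∑ t, (k t : ℝ) * y t := by
    intro k
    simp [φ, Fintype.linearCombination_apply, Rat.smul_def]
  obtain ⟨s, hs⟩ := φ.rangeRestrict.exists_rightInverse_of_surjective φ.range_rangeRestrict
  let p := s ∘ₗ φ.rangeRestrict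
  have hp : ∀ v, φ (p v) = φ v := by
    intro v
    exact congrArg Subtype.val (LinearMap.congr_fun hs (φ.rangeRestrict v))
  refine ⟨fun t r => p (Pi.single t 1) r, ?_, ?_⟩
  · intro t
    have h := hp (Pi.single t 1)
    rw [hφ, hφ] at h
    rw [h]
    rw [Finset.sum_eq_single t] <;> simp +contextual
  · intro k hk r
    have h0 : φ.rangeRestrict k = 0 := Subtype.ext (by simpa [hφ] using hk)
    have h1 : p k = 0 := by simp [p, h0]
    have h2 : k = ∑ t, k t • (Pi.single t 1 : Fin m → ℚ) := by
      ext i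
      simp [Finset.sum_apply, Pi.single_apply]
    rw [h2, map_sum] at h1
    simpa using congrFun h1 r

theorem linear_part (m : ℕ) (x : Fin m → ℝ) :
    ∃ (A : Matrix (Fin m) (Fin m) ℤ) (ℓ : Fin m → ℝ),
      (∀ j : Fin m, ∃ q : ℚ, ℓ j = (q : ℝ) * Real.pi) ∧
      (∃ z₀ : Fin m → ℝ, ∀ j : Fin m, x j = (∑ r : Fin m, (A j r : ℝ) * z₀ r) + ℓ j) ∧
      (∀ k : Fin m → ℤ, (∃ q : ℚ, ∑ t, (k t : ℝ) * x t = q * Real.pi) → ∀ z : Fin m → ℝ,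
        ∑ t, (k t : ℝ) * ((∑ r : Fin m, (A t r : ℝ) * z r) + ℓ t) = ∑ t, (k t : ℝ) * x t) := by
  let V : Submodule ℚ ℝ := Submodule.span ℚ {Real.pi}
  obtain ⟨ρ, hρ⟩ := V.subtype.exists_leftInverse_of_injective V.ker_subtype
  have hV : ∀ v, v ∈ V ↔ ∃ q : ℚ, v = q * Real.pi := by
    intro v
    simp [V, Submodule.mem_span_singleton, Rat.smul_def, eq_comm]
  let ℓ : Fin m → ℝ := fun t => (ρ (x t) : ℝ)
  have hk0 : ∀ k : Fin m → ℤ, (∃ q : ℚ, ∑ t, (k t : ℝ) * x t = q * Real.pi) →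
      ∑ t, (k t : ℝ) * ℓ t = ∑ t, (k t : ℝ) * x t := by
    intro k hk
    have h1 : ((ρ (∑ t, (k t : ℝ) * x t) : V) : ℝ) = ∑ t, (k t : ℝ) * x t :=
      congrArg Subtype.val (LinearMap.congr_fun hρ ⟨_, (hV _).2 hk⟩)
    rw [← h1, map_sum]
    simp [← zsmul_eq_mul, ℓ]
  obtain ⟨B, hB1, hB2⟩ := exists_square_proj m (fun t => x t - ℓ t)
  let N : ℕ := ∏ t, ∏ r, (B t r).den
  have hN : (N : ℝ) ≠ 0 := by
    have : N ≠ 0 := Finset.prod_ne_zero_iff.2 fun t _ =>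
      Finset.prod_ne_zero_iff.2 fun r _ => (B t r).den_nz
    exact_mod_cast this
  have hint : ∀ t r, ∃ a : ℤ, (a : ℚ) = N * B t r := by
    intro t r
    have hd : (B t r).den ∣ N :=
      (Finset.dvd_prod_of_mem (fun r => (B t r).den) (Finset.mem_univ r)).trans
        (Finset.dvd_prod_of_mem (fun t => ∏ r, (B t r).den) (Finset.mem_univ t))
    obtain ⟨d, hd⟩ := hd
    refine ⟨d * (B t r).num, ?_⟩
    have := Rat.den_mul_eq_num (B t r)
    rw [hd]
    push_cast
    rw [← this]
    ring
  choose A hA using hint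
  have hAR : ∀ t r, (A t r : ℝ) = N * (B t r : ℝ) := by
    intro t r
    exact_mod_cast congrArg (fun q : ℚ => (q : ℝ)) (hA t r)
  refine ⟨A, ℓ, fun j => (hV _).1 (ρ (x j)).2, ⟨fun r => (x r - ℓ r) / N, ?_⟩, ?_⟩
  · intro j
    have h := hB1 j
    rw [← sub_eq_iff_eq_add, h]
    refine Finset.sum_congr rfl fun r _ => ?_
    rw [hAR]
    field_simp
  · intro k hk z
    have h1 := hk0 k hk
    have h2 := hB2 (fun t => (k t : ℚ)) (by
      simp only [Rat.cast_intCast, mul_sub, Finset.sum_sub_distrib]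
      rw [h1, sub_self])
    have h3 : ∀ r, ∑ t, (k t : ℝ) * (A t r : ℝ) = 0 := by
      intro r
      have : ∑ t, (k t : ℝ) * (B t r : ℝ) = 0 := by exact_mod_cast h2 r
      calc ∑ t, (k t : ℝ) * (A t r : ℝ) = ∑ t, (N : ℝ) * ((k t : ℝ) * (B t r : ℝ)) :=
            Finset.sum_congr rfl fun t _ => by rw [hAR]; ring
        _ = 0 := by rw [← Finset.mul_sum, this, mul_zero]
    simp_rw [mul_add, Finset.sum_add_distrib, h1, Finset.mul_sum]
    rw [Finset.sum_comm]
    simp_rw [← mul_assoc, ← Finset.sum_mul, h3]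
    simp

/-- The unit complex number with argument `θ`. -/
noncomputable def circ (θ : ℝ) : ℂ := Complex.exp (Complex.I * (θ : ℂ))

theorem circ_sub (a b : ℝ) : circ (a - b) = circ a * (circ b)⁻¹ := by
  simp only [circ]
  rw [← Complex.exp_neg, ← Complex.exp_add]
  congr 1
  push_cast
  ring

theorem circ_add (a b : ℝ) : circ (a + b) = circ a * circ b := by
  simp only [circ]
  rw [← Complex.exp_add]
  congr 1
  push_cast
  ring

theorem circ_ne_zero (a : ℝ) : circ a ≠ 0 := Complex.exp_ne_zero _

theorem circ_isOfFinOrder (θ : ℝ) : IsOfFinOrder (circ θ) ↔ ∃ q : ℚ, θ = q * Real.pi := by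
  rw [isOfFinOrder_iff_pow_eq_one]
  have hpow : ∀ n : ℕ, circ θ ^ n = 1 ↔ ∃ k : ℤ, n * θ = k * (2 * Real.pi) := by
    intro n
    rw [circ, ← Complex.exp_nat_mul, Complex.exp_eq_one_iff]
    refine exists_congr fun k => ?_
    have h1 : (n : ℂ) * (Complex.I * (θ : ℂ)) = Complex.I * ((n * θ : ℝ) : ℂ) := by
      push_cast; ring
    have h2 : (k : ℂ) * (2 * Real.pi * Complex.I) = Complex.I * ((k * (2 * Real.pi) : ℝ) : ℂ) := by
      push_cast; ring
    rw [h1, h2, mul_right_inj' Complex.I_ne_zero, Complex.ofReal_inj]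
  constructor
  · rintro ⟨n, hn, h⟩
    obtain ⟨k, hk⟩ := (hpow n).1 h
    refine ⟨2 * k / n, ?_⟩
    have : (n : ℝ) ≠ 0 := by exact_mod_cast hn.ne'
    push_cast
    field_simp
    linarith
  · rintro ⟨q, rfl⟩
    refine ⟨2 * q.den, by have := q.den_pos; omega, (hpow _).2 ⟨q.num, ?_⟩⟩
    have : (q.den : ℝ) * q = q.num := by exact_mod_cast Rat.den_mul_eq_num q
    push_cast
    rw [← this]
    ring

theorem eval_circ {m : ℕ} (P : MvPolynomial (Fin m) ℂ) (y : Fin m → ℝ) :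
    MvPolynomial.eval (fun t => Complex.exp (Complex.I * ((y t : ℝ) : ℂ))) P =
      ∑ b ∈ P.support, P.coeff b * circ (∑ t, (b t : ℝ) * y t) := by
  rw [MvPolynomial.eval_eq']
  refine Finset.sum_congr rfl fun b _ => ?_
  congr 1
  rw [circ]
  push_cast
  rw [Finset.mul_sum, Complex.exp_sum]
  refine Finset.prod_congr rfl fun t _ => ?_
  rw [← Complex.exp_nat_mul]
  congr 1
  ring

/-- The analytic core: vanishing propagates from the sequence to all points `y` satisfying the
rational relations of `x`. -/
theorem vanish_core {m : ℕ} (P : MvPolynomial (Fin m) ℂ)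
    (X : ℕ → (Fin m → ℝ)) (x : Fin m → ℝ)
    (hrat : ∀ (i : ℕ) (j : Fin m), ∃ q : ℚ, X i j = (q : ℝ) * Real.pi)
    (hlim : Filter.Tendsto X Filter.atTop (nhds x))
    (hzero : ∀ i, ∑ b ∈ P.support, P.coeff b * circ (∑ t, (b t : ℝ) * X i t) = 0)
    (y : Fin m → ℝ)
    (hy : ∀ k : Fin m → ℤ, (∃ q : ℚ, ∑ t, (k t : ℝ) * x t = q * Real.pi) →
      ∑ t, (k t : ℝ) * y t = ∑ t, (k t : ℝ) * x t) :
    ∑ b ∈ P.support, P.coeff b * circ (∑ t, (b t : ℝ) * y t) = 0 := by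
  classical
  let U : Ultrafilter ℕ := Filter.hyperfilter ℕ
  have hU : (U : Filter ℕ) ≤ Filter.atTop := by
    rw [← Nat.cofinite_eq_atTop]
    exact Filter.hyperfilter_le_cofinite
  let D : (Fin m →₀ ℕ) → (Fin m → ℝ) → ℝ := fun b v => ∑ t, (b t : ℝ) * v t
  change ∑ b ∈ P.support, P.coeff b * circ (D b y) = 0
  have hzero' : ∀ i, ∑ b ∈ P.support, P.coeff b * circ (D b (X i)) = 0 := hzero
  have hDsub : ∀ a b v, D b v - D a v = ∑ t, (((b t : ℤ) - (a t : ℤ) : ℤ) : ℝ) * v t := by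
    intro a b v
    simp only [D]
    rw [← Finset.sum_sub_distrib]
    refine Finset.sum_congr rfl fun t _ => ?_
    push_cast
    ring
  have hDcont : ∀ b, Continuous (D b) := fun b => by
    simp only [D]; fun_prop
  have hcirc : Continuous circ := by
    unfold circ; fun_prop
  let u : (Fin m →₀ ℕ) → ℕ → ℂ := fun b i => circ (D b (X i) - D b x)
  let g : (Fin m →₀ ℕ) → Filter.Germ (U : Filter ℕ) ℂ := fun b => (u b : Filter.Germ _ ℂ)
  have hg : ∀ a b, g b = g a ↔
      ∀ᶠ i in (U : Filter ℕ), circ (D b (X i) - D a (X i)) = circ (D b x - D a x) := by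
    intro a b
    rw [Filter.Germ.coe_eq]
    refine Filter.eventually_congr (Filter.Eventually.of_forall fun i => ?_)
    simp only [u, circ_sub]
    have h1 := circ_ne_zero (D b (X i))
    have h2 := circ_ne_zero (D a (X i))
    have h3 := circ_ne_zero (D b x)
    have h4 := circ_ne_zero (D a x)
    field_simp
  have htor : ∀ a b i, IsOfFinOrder (circ (D b (X i) - D a (X i))) := by
    intro a b i
    rw [circ_isOfFinOrder, hDsub]
    choose q hq using hrat i
    refine ⟨∑ t, (((b t : ℤ) - (a t : ℤ) : ℤ) : ℚ) * q t, ?_⟩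
    push_cast
    rw [Finset.sum_mul]
    refine Finset.sum_congr rfl fun t _ => ?_
    rw [hq]
    ring
  rw [← Finset.sum_fiberwise_of_maps_to (t := P.support.image g)
    (fun b hb => Finset.mem_image_of_mem g hb)]
  refine Finset.sum_eq_zero fun v hv => ?_
  obtain ⟨a, ha, rfl⟩ := Finset.mem_image.1 hv
  have key := key_sum (U : Filter ℕ) P.support (P.support.filter fun b => g b = g a)
    (Finset.filter_subset _ _) (fun b => P.coeff b)
    (fun b i => circ (D b (X i) - D a (X i))) (fun b => circ (D b x - D a x))
    (fun b i => htor a b i) (by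
      intro i
      simp_rw [circ_sub, ← mul_assoc]
      rw [← Finset.sum_mul, hzero', zero_mul]) (by
      intro b hb
      exact (hg a b).1 (Finset.mem_filter.1 hb).2) (by
      intro b hb hbT d
      have hne : ¬ g b = g a := fun h => hbT (Finset.mem_filter.2 ⟨hb, h⟩)
      rw [hg, ← Ultrafilter.eventually_not] at hne
      by_cases hd : d = circ (D b x - D a x)
      · rw [hd]; exact hne
      · have ht : Filter.Tendsto (fun i => circ (D b (X i) - D a (X i))) U
            (nhds (circ (D b x - D a x))) :=
          (((hcirc.comp ((hDcont b).sub (hDcont a))).tendsto x).comp hlim).mono_left hU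
        exact ht.eventually_ne (Ne.symm hd))
  have hfin : ∀ b ∈ P.support.filter (fun b => g b = g a),
      P.coeff b * circ (D b y) = P.coeff b * circ (D b x - D a x) * circ (D a y) := by
    intro b hb
    have h1 := (hg a b).1 (Finset.mem_filter.1 hb).2
    obtain ⟨i, hi⟩ := h1.exists
    have h2 := htor a b i
    rw [hi, circ_isOfFinOrder, hDsub] at h2
    have h3 := hy (fun t => (b t : ℤ) - (a t : ℤ)) h2
    rw [← hDsub, ← hDsub] at h3
    rw [← h3, mul_assoc, ← circ_add, sub_add_cancel]
  rw [Finset.sum_congr rfl hfin, ← Finset.sum_mul, key, zero_mul]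

theorem limit_of_rational_zeros (m s : ℕ) (hm : 1 ≤ m)
    (P : Fin s → MvPolynomial (Fin m) ℂ)
    (X : ℕ → (Fin m → ℝ)) (x : Fin m → ℝ)
    (hrat : ∀ (i : ℕ) (j : Fin m), ∃ q : ℚ, X i j = (q : ℝ) * Real.pi)
    (hlim : Filter.Tendsto X Filter.atTop (nhds x))
    (hzero : ∀ (i : ℕ) (j : Fin s),
      MvPolynomial.eval (fun t => Complex.exp (Complex.I * ((X i t : ℝ) : ℂ))) (P j) = 0) :
    ∃ (A : Matrix (Fin m) (Fin m) ℤ) (ℓ : Fin m → ℝ),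
      (∀ j : Fin m, ∃ q : ℚ, ℓ j = (q : ℝ) * Real.pi) ∧
      (∃ z₀ : Fin m → ℝ, ∀ j : Fin m, ∃ c : ℤ,
        x j - ((∑ r : Fin m, (A j r : ℝ) * z₀ r) + ℓ j) = 2 * Real.pi * c) ∧
      (∀ (z : Fin m → ℝ) (j : Fin s),
        MvPolynomial.eval
          (fun t => Complex.exp
            (Complex.I * ((((∑ r : Fin m, (A t r : ℝ) * z r) + ℓ t : ℝ)) : ℂ))) (P j) = 0) := by
  obtain ⟨A, ℓ, h1, ⟨z₀, h2⟩, h3⟩ := linear_part m x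
  refine ⟨A, ℓ, h1, ⟨z₀, fun j => ⟨0, ?_⟩⟩, fun z j => ?_⟩
  · rw [← h2 j]
    simp
  · rw [eval_circ (P j) (fun t => (∑ r : Fin m, (A t r : ℝ) * z r) + ℓ t)]
    refine vanish_core (P j) X x hrat hlim (fun i => ?_) _ (fun k hk => h3 k hk z)
    rw [← eval_circ]
    exact hzero i j
end

section
/- (Laurent's theorem, in the torus formalism of the paper) Let m ≥ 1 and let P₁, …, P_s be polynomials in m variables with complex coefficients. Then there exist finitely many pairs (A_j, ℓ_j), j ∈ J, where each A_j is an m×m integer matrix and each ℓ_j ∈ ℝ^m has all coordinates rational multiples of π, such that: (1) for every j ∈ J, every z ∈ ℝ^m, and every t ∈ {1, …, s}, P_t(e^{i(A_j·z + ℓ_j)₁}, …, e^{i(A_j·z + ℓ_j)_m}) = 0; and (2) for every x ∈ ℝ^m all of whose coordinates are rational multiples of π with P_t(e^{ix₁}, …, e^{ix_m}) = 0 for all t, there exist j ∈ J and z ∈ ℝ^m with all coordinates rational multiples of π such that x ≡ A_j·z + ℓ_j componentwise modulo 2π. -/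
namespace LaurentTorus

/-- The standard primitive root of unity of order `N`. -/
noncomputable def zt (N : ℕ) : ℂ := Complex.exp (2 * Real.pi * Complex.I / N)

lemma zt_prim {N : ℕ} (hN : 0 < N) : IsPrimitiveRoot (zt N) N :=
  Complex.isPrimitiveRoot_exp N hN.ne'

lemma zt_pow {N d : ℕ} (hN : 0 < N) (hd : 0 < d) : zt (N * d) ^ d = zt N := by
  unfold zt
  rw [← Complex.exp_nat_mul]
  congr 1
  have : (N : ℂ) ≠ 0 := by exact_mod_cast hN.ne'
  have : (d : ℂ) ≠ 0 := by exact_mod_cast hd.ne'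
  push_cast
  field_simp

/-- `x` is a rational polynomial in the standard root of unity of order `N`. -/
def InCyc (N : ℕ) (x : ℂ) : Prop := ∃ q : Polynomial ℚ, x = Polynomial.aeval (zt N) q

lemma InCyc.mono {N M : ℕ} {x : ℂ} (h : InCyc N x) (hM : 0 < M) (hd : N ∣ M) : InCyc M x := by
  obtain ⟨q, rfl⟩ := h
  obtain ⟨d, rfl⟩ := hd
  have hN : 0 < N := Nat.pos_of_mul_pos_right hM
  have hd : 0 < d := Nat.pos_of_mul_pos_left hM
  refine ⟨Polynomial.expand ℚ d q, ?_⟩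
  rw [Polynomial.expand_aeval, zt_pow hN hd]

/-- roots of unity -/
def rts : Set ℂ := {z | ∃ n : ℕ, 0 < n ∧ z ^ n = 1}

lemma inCyc_of_mem {x : ℂ} (hx : x ∈ IntermediateField.adjoin ℚ rts) :
    ∃ N : ℕ, 0 < N ∧ InCyc N x := by
  have halg : ∀ z ∈ rts, IsAlgebraic ℚ z := by
    rintro z ⟨n, hn, hz⟩
    refine ⟨Polynomial.X ^ n - 1, ?_, ?_⟩
    · exact Polynomial.X_pow_sub_C_ne_zero hn 1
    · simp [hz]
  have hx' : x ∈ (IntermediateField.adjoin ℚ rts).toSubalgebra := hx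
  rw [IntermediateField.adjoin_toSubalgebra_of_isAlgebraic halg] at hx'
  clear hx
  induction hx' using Algebra.adjoin_induction with
  | mem z hz =>
    obtain ⟨n, hn, hz⟩ := hz
    have : NeZero n := ⟨hn.ne'⟩
    obtain ⟨i, -, rfl⟩ := (zt_prim hn).eq_pow_of_pow_eq_one hz
    exact ⟨n, hn, Polynomial.X ^ i, by simp⟩
  | algebraMap r => exact ⟨1, one_pos, Polynomial.C r, by simp⟩
  | add x y hx hy h1 h2 =>
    obtain ⟨N, hN, h1⟩ := h1
    obtain ⟨M, hM, h2⟩ := h2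
    have hNM := Nat.mul_pos hN hM
    obtain ⟨p, hp⟩ := h1.mono hNM (dvd_mul_right _ _)
    obtain ⟨q, hq⟩ := h2.mono hNM (dvd_mul_left _ _)
    exact ⟨N * M, hNM, p + q, by simp [← hp, ← hq]⟩
  | mul x y hx hy h1 h2 =>
    obtain ⟨N, hN, h1⟩ := h1
    obtain ⟨M, hM, h2⟩ := h2
    have hNM := Nat.mul_pos hN hM
    obtain ⟨p, hp⟩ := h1.mono hNM (dvd_mul_right _ _)
    obtain ⟨q, hq⟩ := h2.mono hNM (dvd_mul_left _ _)
    exact ⟨N * M, hNM, p * q, by simp [← hp, ← hq]⟩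

lemma conj_poly {n e : ℕ} (hn : 0 < n) (he : e.Coprime n) (R : Polynomial ℚ)
    (h : Polynomial.aeval (zt n) R = 0) : Polynomial.aeval (zt n ^ e) R = 0 := by
  have h1 := Polynomial.cyclotomic_eq_minpoly_rat (zt_prim hn) hn
  have h2 := Polynomial.cyclotomic_eq_minpoly_rat ((zt_prim hn).pow_of_coprime e he) hn
  have h3 := minpoly.dvd ℚ (zt n) h
  rw [← h1, h2] at h3
  exact (minpoly.dvd_iff).1 h3

/-- Galois conjugation of a relation with cyclotomic coefficients. -/
lemma conj_cyc {ι : Type*} (T : Finset ι) (N n e : ℕ) (hn : 0 < n) (hNn : N ∣ n)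
    (he : e.Coprime n) (heN : e ≡ 1 [MOD N]) (c ζ : ι → ℂ) (hc : ∀ i ∈ T, InCyc N (c i))
    (hζ : ∀ i ∈ T, ζ i ^ n = 1) (h : ∑ i ∈ T, c i * ζ i = 0) :
    ∑ i ∈ T, c i * ζ i ^ e = 0 := by
  classical
  obtain ⟨d, rfl⟩ := hNn
  have hN : 0 < N := Nat.pos_of_mul_pos_right hn
  have hd : 0 < d := Nat.pos_of_mul_pos_left hn
  choose! q hq using hc
  have : NeZero (N * d) := ⟨hn.ne'⟩
  have hk : ∀ i ∈ T, ∃ k : ℕ, ζ i = zt (N * d) ^ k := by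
    intro i hi
    obtain ⟨k, -, hk⟩ := (zt_prim hn).eq_pow_of_pow_eq_one (hζ i hi)
    exact ⟨k, hk.symm⟩
  choose! k hk using hk
  have hNe : zt N ^ e = zt N := by
    have h1 := (zt_prim hN).pow_eq_one
    calc zt N ^ e = zt N ^ (e % N) := pow_eq_pow_mod e h1
      _ = zt N ^ (1 % N) := by rw [heN]
      _ = zt N ^ 1 := (pow_eq_pow_mod 1 h1).symm
      _ = zt N := pow_one _
  have key := conj_poly hn he
    (∑ i ∈ T, Polynomial.expand ℚ d (q i) * Polynomial.X ^ k i) (by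
      rw [map_sum, ← h]
      refine Finset.sum_congr rfl fun i hi => ?_
      rw [map_mul, Polynomial.expand_aeval, zt_pow hN hd, ← hq i hi, hk i hi]
      simp)
  rw [map_sum] at key
  rw [← key]
  refine Finset.sum_congr rfl fun i hi => ?_
  rw [map_mul, Polynomial.expand_aeval, ← pow_mul, mul_comm e d, pow_mul, zt_pow hN hd, hNe,
    ← hq i hi, hk i hi]
  simp [← pow_mul, mul_comm]

lemma lemA {ι : Type*} (T0 : Finset ι) (a : ι → ℂ) : ∃ N : ℕ, 0 < N ∧
    ∀ T ⊆ T0, ∀ n e : ℕ, 0 < n → N ∣ n → e.Coprime n → e ≡ 1 [MOD N] → ∀ ζ : ι → ℂ,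
      (∀ i ∈ T, ζ i ^ n = 1) → ∑ i ∈ T, a i * ζ i = 0 → ∑ i ∈ T, a i * ζ i ^ e = 0 := by
  classical
  let K := IntermediateField.adjoin ℚ rts
  let b := Module.Basis.ofVectorSpace K ℂ
  have hex : ∀ x : K, ∃ N : ℕ, 0 < N ∧ InCyc N x := fun x => inCyc_of_mem x.2
  choose F hF0 hF using hex
  have hpos : 0 < ∏ i ∈ T0, ∏ j ∈ (b.repr (a i)).support, F (b.repr (a i) j) :=
    Finset.prod_pos fun i _ => Finset.prod_pos fun j _ => hF0 _
  refine ⟨_, hpos, ?_⟩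
  set N := ∏ i ∈ T0, ∏ j ∈ (b.repr (a i)).support, F (b.repr (a i) j) with hN
  have hcyc : ∀ i ∈ T0, ∀ j, InCyc N (b.repr (a i) j : K) := by
    intro i hi j
    by_cases hj : j ∈ (b.repr (a i)).support
    · exact (hF _).mono hpos ((Finset.dvd_prod_of_mem (fun j => F (b.repr (a i) j)) hj).trans
        (Finset.dvd_prod_of_mem (fun i => ∏ j ∈ (b.repr (a i)).support, F (b.repr (a i) j)) hi))
    · rw [Finsupp.notMem_support_iff.1 hj]
      exact ⟨0, by simp⟩
  -- coordinates of sums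
  have hcoord : ∀ T ⊆ T0, ∀ ξ : ι → ℂ, (∀ i ∈ T, ξ i ∈ K) → ∀ j,
      ((b.repr (∑ i ∈ T, a i * ξ i) j : K) : ℂ) = ∑ i ∈ T, (b.repr (a i) j : K) * ξ i := by
    intro T hT ξ hξ j
    rw [map_sum, Finsupp.finsetSum_apply, AddSubmonoidClass.coe_finsetSum]
    refine Finset.sum_congr rfl fun i hi => ?_
    have : a i * ξ i = (⟨ξ i, hξ i hi⟩ : K) • a i := by
      rw [mul_comm]; rfl
    rw [this, map_smul, Finsupp.smul_apply, smul_eq_mul, mul_comm]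
    rfl
  intro T hT n e hn hNn he heN ζ hζ h
  have hmem : ∀ i ∈ T, ζ i ∈ K := fun i hi =>
    IntermediateField.subset_adjoin ℚ rts ⟨n, hn, hζ i hi⟩
  apply b.repr.injective
  ext j
  rw [hcoord T hT _ (fun i hi => pow_mem (hmem i hi) e), map_zero]
  simp only [Finsupp.coe_zero, Pi.zero_apply, ZeroMemClass.coe_zero]
  refine conj_cyc T N n e hn hNn he heN _ ζ (fun i hi => hcyc i (hT hi) j) hζ ?_
  rw [← hcoord T hT _ hmem, h]
  simp

/-- Splitting by a Vandermonde argument. -/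
lemma split_classes {ι : Type*} [DecidableEq ι] (T : Finset ι) (k : ℕ) (hk : T.card ≤ k) (b χ : ι → ℂ)
    (h : ∀ s < k, ∑ i ∈ T, b i * χ i ^ s = 0) (w : ℂ) :
    ∑ i ∈ T with χ i = w, b i = 0 := by
  classical
  by_cases hw : w ∈ T.image χ
  swap
  · rw [Finset.filter_false_of_mem, Finset.sum_empty]
    intro i hi hiw
    exact hw (Finset.mem_image.2 ⟨i, hi, hiw⟩)
  let Q : Polynomial ℂ := ∏ v ∈ (T.image χ).erase w, (Polynomial.X - Polynomial.C v)
  have hdeg : Q.natDegree < k := by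
    rw [Polynomial.natDegree_prod_of_monic _ _ (fun v _ => Polynomial.monic_X_sub_C v)]
    simp only [Polynomial.natDegree_X_sub_C, Finset.sum_const, smul_eq_mul, mul_one]
    exact (Finset.card_erase_lt_of_mem hw).trans_le (Finset.card_image_le.trans hk)
  have h1 : ∑ i ∈ T, b i * Q.eval (χ i) = 0 := by
    simp_rw [Polynomial.eval_eq_sum_range' hdeg, Finset.mul_sum]
    rw [Finset.sum_comm]
    refine Finset.sum_eq_zero fun s hs => ?_
    have := h s (Finset.mem_range.1 hs)
    calc _ = Q.coeff s * ∑ i ∈ T, b i * χ i ^ s := by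
            rw [Finset.mul_sum]; exact Finset.sum_congr rfl fun i _ => by ring
      _ = 0 := by rw [this, mul_zero]
  have h2 : (∑ i ∈ T with χ i = w, b i) * Q.eval w = 0 := by
    rw [← h1, Finset.sum_mul, Finset.sum_filter]
    refine Finset.sum_congr rfl fun i hi => ?_
    split_ifs with hiw
    · rw [hiw]
    · have : Q.eval (χ i) = 0 := by
        rw [Polynomial.eval_prod]
        refine Finset.prod_eq_zero (i := χ i)
          (Finset.mem_erase.2 ⟨hiw, Finset.mem_image_of_mem _ hi⟩) (by simp)
      rw [this, mul_zero]
  refine (mul_eq_zero.1 h2).resolve_right ?_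
  rw [Polynomial.eval_prod]
  refine Finset.prod_ne_zero_iff.2 ?_
  intro v hv
  simpa [sub_eq_zero] using (Finset.ne_of_mem_erase hv).symm

lemma exists_prime_bad {N q k : ℕ} (hq : 0 < q) (h : ¬ q ∣ k.factorial) :
    ∃ p, p.Prime ∧ p ∣ q ∧ (p ∣ N * (q / p) ∨ k < p) := by
  by_contra! hc
  apply h
  have hsq : Squarefree q := by
    rw [Nat.squarefree_iff_prime_squarefree]
    intro p hp hpp
    refine (hc p hp ((dvd_mul_right p p).trans hpp)).1 (Dvd.dvd.mul_left ?_ N)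
    exact (Nat.dvd_div_iff_mul_dvd ((dvd_mul_right p p).trans hpp)).2 hpp
  rw [← Nat.prod_primeFactors_of_squarefree hsq]
  refine Finset.prod_primes_dvd _ (fun p hp => (Nat.prime_of_mem_primeFactors hp).prime) ?_
  intro p hp
  have hpp := Nat.prime_of_mem_primeFactors hp
  exact (hpp.dvd_factorial).2 (hc p hpp (Nat.dvd_of_mem_primeFactors hp)).2

lemma exists_shift {p n' k : ℕ} (hp : p.Prime) (h : p ∣ n' ∨ k < p) :
    ∃ t1 : ℕ, ∀ s < k, (1 + (t1 + s) * n').Coprime (n' * p) := by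
  have hco : ∀ t, (1 + t * n').Coprime n' := by
    intro t; simp
  by_cases hpn : p ∣ n'
  · refine ⟨0, fun s _ => Nat.Coprime.mul_right (hco _) ((hco _).coprime_dvd_right hpn)⟩
  have hk : k < p := h.resolve_left hpn
  have hcop : n'.Coprime p := ((Nat.Prime.coprime_iff_not_dvd hp).2 hpn).symm
  have : Fact p.Prime := ⟨hp⟩
  have hn0 : (n' : ZMod p) ≠ 0 := by rwa [Ne, ZMod.natCast_eq_zero_iff]
  refine ⟨(-(n' : ZMod p)⁻¹).val + 1, fun s hs => Nat.Coprime.mul_right (hco _) ?_⟩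
  rw [Nat.coprime_comm, Nat.Prime.coprime_iff_not_dvd hp, ← ZMod.natCast_eq_zero_iff]
  have hs0 : ((s + 1 : ℕ) : ZMod p) ≠ 0 := by
    rw [Ne, ZMod.natCast_eq_zero_iff]
    intro hd
    have := Nat.le_of_dvd (by omega) hd
    omega
  push_cast
  rw [ZMod.natCast_zmod_val]
  have : (1 + (-(n' : ZMod p)⁻¹ + 1 + s) * n') = ((s + 1 : ℕ) : ZMod p) * n' := by
    push_cast; field_simp; ring
  rw [this]
  exact mul_ne_zero hs0 hn0

lemma lemB {ι : Type*} (T0 : Finset ι) (a : ι → ℂ) : ∃ M : ℕ, 0 < M ∧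
    ∀ T ⊆ T0, ∀ ζ : ι → ℂ, (∃ n : ℕ, 0 < n ∧ ∀ i ∈ T, ζ i ^ n = 1) →
      ∑ i ∈ T, a i * ζ i = 0 → ∀ w, ∑ i ∈ T with ζ i ^ M = w, a i * ζ i = 0 := by
  classical
  obtain ⟨N, hN, hA⟩ := lemA T0 a
  set k := T0.card with hk
  refine ⟨N * k.factorial, Nat.mul_pos hN (Nat.factorial_pos _), ?_⟩
  suffices H : ∀ q : ℕ, 0 < q → ∀ T ⊆ T0, ∀ ζ : ι → ℂ, (∀ i ∈ T, ζ i ^ (N * q) = 1) →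
      ∑ i ∈ T, a i * ζ i = 0 → ∀ w, ∑ i ∈ T with ζ i ^ (N * k.factorial) = w, a i * ζ i = 0 by
    rintro T hT ζ ⟨n, hn, hζ⟩ h
    exact H n hn T hT ζ (fun i hi => by rw [mul_comm, pow_mul, hζ i hi, one_pow]) h
  intro q
  induction q using Nat.strong_induction_on with
  | _ q ih =>
  intro hq T hT ζ hζ h w
  by_cases hdiv : q ∣ k.factorial
  · have h1 : ∀ i ∈ T, ζ i ^ (N * k.factorial) = 1 := by
      intro i hi
      obtain ⟨c, hc⟩ := hdiv
      rw [hc, ← mul_assoc, pow_mul, hζ i hi, one_pow]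
    by_cases hw : w = 1
    · rw [Finset.filter_true_of_mem (fun i hi => by rw [h1 i hi, hw]), h]
    · rw [Finset.filter_false_of_mem (fun i hi => by rw [h1 i hi]; exact fun h => hw h.symm),
        Finset.sum_empty]
  obtain ⟨p, hp, ⟨q', rfl⟩, hbad⟩ := exists_prime_bad (N := N) hq hdiv
  rw [Nat.mul_div_cancel_left _ hp.pos] at hbad
  have hq' : 0 < q' := Nat.pos_of_mul_pos_left hq
  have hn' : 0 < N * q' := Nat.mul_pos hN hq'
  obtain ⟨t1, ht1⟩ := exists_shift hp hbad
  have hζ0 : ∀ i ∈ T, ζ i ≠ 0 := by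
    intro i hi h0
    have := hζ i hi
    rw [h0, zero_pow (Nat.mul_pos hN hq).ne'] at this
    exact zero_ne_one this
  set χ : ι → ℂ := fun i => ζ i ^ (N * q') with hχ
  have hcls := split_classes T k (Finset.card_le_card hT) (fun i => a i * ζ i * χ i ^ t1) χ (by
    intro s hs
    have := hA T hT (N * (p * q')) (1 + (t1 + s) * (N * q')) (Nat.mul_pos hN hq)
      (dvd_mul_right _ _) (by
        have := ht1 s hs
        rwa [show N * (p * q') = N * q' * p by ring]) (by
        have : (1 + N * ((t1 + s) * q')) ≡ 1 [MOD N] := by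
          simp [Nat.ModEq]
        rwa [show 1 + (t1 + s) * (N * q') = 1 + N * ((t1 + s) * q') by ring]) ζ hζ h
    rw [← this]
    refine Finset.sum_congr rfl fun i _ => ?_
    simp only [hχ]
    ring)
  have hcls' : ∀ v, ∑ i ∈ T with χ i = v, a i * ζ i = 0 := by
    intro v
    have h1 := hcls v
    have h2 : ∑ i ∈ T with χ i = v, a i * ζ i * χ i ^ t1 =
        (∑ i ∈ T with χ i = v, a i * ζ i) * v ^ t1 := by
      rw [Finset.sum_mul]
      refine Finset.sum_congr rfl fun i hi => ?_
      rw [(Finset.mem_filter.1 hi).2]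
    rw [h2] at h1
    rcases mul_eq_zero.1 h1 with h1 | h1
    · exact h1
    · have hv : v = 0 := eq_zero_of_pow_eq_zero h1
      rw [Finset.filter_false_of_mem, Finset.sum_empty]
      intro i hi
      rw [hv]
      exact pow_ne_zero _ (hζ0 i hi)
  rw [← Finset.sum_fiberwise_of_maps_to (g := χ) (t := T.image χ)
    (fun i hi => Finset.mem_image_of_mem _ (Finset.mem_filter.1 hi).1)]
  refine Finset.sum_eq_zero fun v hv => ?_
  obtain ⟨i0, hi0, rfl⟩ := Finset.mem_image.1 hv
  have hz := hζ0 i0 hi0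
  have := ih q' (lt_mul_of_one_lt_left hq' hp.one_lt) hq' (T.filter (fun i => χ i = χ i0))
    ((Finset.filter_subset _ _).trans hT) (fun i => ζ i / ζ i0) (by
      intro i hi
      have := (Finset.mem_filter.1 hi).2
      rw [div_pow]
      exact (div_eq_one_iff_eq (pow_ne_zero _ hz)).2 this) (by
      have := hcls' (χ i0)
      simp_rw [mul_div_assoc']
      rw [← Finset.sum_div, this, zero_div]) (w / ζ i0 ^ (N * k.factorial))
  simp_rw [mul_div_assoc'] at this
  rw [← Finset.sum_div, div_eq_zero_iff] at this
  have := this.resolve_right hz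
  rw [← this, Finset.filter_filter, Finset.filter_filter]
  refine Finset.sum_congr (Finset.filter_congr fun i _ => ?_) fun _ _ => rfl
  rw [div_pow, div_left_inj' (pow_ne_zero _ hz), and_comm]

section
open Matrix

lemma exists_ginv {V W : Type*} [AddCommGroup V] [AddCommGroup W] [Module ℚ V] [Module ℚ W]
    (f : V →ₗ[ℚ] W) : ∃ g : W →ₗ[ℚ] V, ∀ v, f (g (f v)) = f v := by
  obtain ⟨g0, hg0⟩ := f.rangeRestrict.exists_rightInverse_of_surjective f.range_rangeRestrict
  obtain ⟨g, hg⟩ := LinearMap.exists_extend g0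
  refine ⟨g, fun v => ?_⟩
  have h1 : g (f v) = g0 (f.rangeRestrict v) := by
    rw [← hg]; rfl
  have h2 := LinearMap.congr_fun hg0 (f.rangeRestrict v)
  rw [h1]
  exact congrArg Subtype.val h2

lemma exists_clear {I J : Type*} [Fintype I] [Fintype J] (G : Matrix I J ℚ) :
    ∃ (D : ℕ) (H : Matrix I J ℤ), 0 < D ∧ ∀ i j, (D : ℚ) * G i j = H i j := by
  classical
  refine ⟨∏ i, ∏ j, (G i j).den, fun i j => (∏ i, ∏ j, (G i j).den : ℕ) / (G i j).den * (G i j).num, ?_, ?_⟩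
  · exact Finset.prod_pos fun i _ => Finset.prod_pos fun j _ => (G i j).den_pos
  · intro i j
    have hd : (G i j).den ∣ ∏ i, ∏ j, (G i j).den :=
      (Finset.dvd_prod_of_mem (fun j => (G i j).den) (Finset.mem_univ j)).trans
        (Finset.dvd_prod_of_mem (fun i => ∏ j, (G i j).den) (Finset.mem_univ i))
    generalize (∏ i, ∏ j, (G i j).den) = D at hd ⊢
    obtain ⟨c, rfl⟩ := hd
    have h0 : ((G i j).den : ℤ) ≠ 0 := by exact_mod_cast (G i j).den_pos.ne'
    push_cast
    rw [Int.mul_ediv_cancel_left _ h0]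
    have := Rat.mul_den_eq_num (G i j)
    push_cast
    rw [← this]; ring

lemma lemD {m : ℕ} {I : Type*} [Fintype I] (B : Matrix I (Fin m) ℤ) :
    ∃ (A : Matrix (Fin m) (Fin m) ℤ) (S : Finset (Fin m → ℚ)), B * A = 0 ∧
      ∀ (y : Fin m → ℚ) (k : I → ℤ), (∀ i, ∑ u, (B i u : ℚ) * y u = k i) →
        ∃ g ∈ S, ∃ (z : Fin m → ℚ) (c : Fin m → ℤ),
          ∀ r, y r = (∑ u, (A r u : ℚ) * z u) + g r + c r := by
  classical
  let Bq : Matrix I (Fin m) ℚ := B.map (Int.cast)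
  obtain ⟨g, hg⟩ := exists_ginv (Matrix.toLin' Bq)
  let G : Matrix (Fin m) I ℚ := LinearMap.toMatrix' g
  have hG : Bq * G * Bq = Bq := by
    apply Matrix.toLin'.injective
    refine LinearMap.ext fun v => ?_
    rw [Matrix.toLin'_mul, Matrix.toLin'_mul]
    simpa [G] using hg v
  obtain ⟨D, H, hD, hH⟩ := exists_clear G
  have hDq : (D : ℚ) ≠ 0 := by exact_mod_cast hD.ne'
  have hHm : H.map (Int.cast : ℤ → ℚ) = (D : ℚ) • G := by
    ext i j; simp [hH]
  let A : Matrix (Fin m) (Fin m) ℤ := Matrix.diagonal (fun _ => (D : ℤ)) - H * B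
  have hA : A.map (Int.cast : ℤ → ℚ) = (D : ℚ) • (1 - G * Bq) := by
    have : (H * B).map (Int.cast : ℤ → ℚ) = H.map (Int.cast : ℤ → ℚ) * Bq :=
      Matrix.map_mul (f := Int.castRingHom ℚ)
    rw [smul_sub, ← Matrix.smul_mul, ← hHm, ← this]
    ext i j
    by_cases hij : i = j <;> simp [A, hij]
  refine ⟨A, Finset.univ.image (fun κ : I → Fin D => G *ᵥ (fun i => ((κ i : ℕ) : ℚ))), ?_, ?_⟩
  · have hinj : Function.Injective (fun X : Matrix I (Fin m) ℤ => X.map (Int.cast : ℤ → ℚ)) :=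
      Matrix.map_injective Int.cast_injective
    apply hinj
    have : (B * A).map (Int.cast : ℤ → ℚ) = Bq * A.map (Int.cast : ℤ → ℚ) :=
      Matrix.map_mul (f := Int.castRingHom ℚ)
    simp only [this, hA]
    rw [Matrix.mul_smul, Matrix.mul_sub, Matrix.mul_one, ← Matrix.mul_assoc, hG, sub_self, smul_zero]
    ext; simp
  · intro y k hk
    have hDz : (D : ℤ) ≠ 0 := by exact_mod_cast hD.ne'
    have hDp : (0 : ℤ) < D := by exact_mod_cast hD
    have hk' : Bq *ᵥ y = fun i => (k i : ℚ) := by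
      ext i; rw [← hk i]; rfl
    have hlt : ∀ i, (k i % D).toNat < D := by
      intro i
      have := Int.emod_lt_of_pos (k i) hDp
      have := Int.emod_nonneg (k i) hDz
      omega
    refine ⟨_, Finset.mem_image_of_mem _ (Finset.mem_univ (fun i => ⟨(k i % D).toNat, hlt i⟩)),
      fun u => y u / D, H *ᵥ (fun i => k i / D), ?_⟩
    have hkk : (fun i => (k i : ℚ)) = (fun i => (((k i % D).toNat : ℕ) : ℚ)) +
        (D : ℚ) • (fun i => ((k i / D : ℤ) : ℚ)) := by
      ext i
      have h1 : (((k i % D).toNat : ℕ) : ℤ) = k i % D := Int.toNat_of_nonneg (Int.emod_nonneg _ hDz)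
      have h2 := Int.emod_add_mul_ediv (k i) D
      simp only [Pi.add_apply, Pi.smul_apply, smul_eq_mul]
      rw [← h1] at h2
      exact_mod_cast h2.symm
    have e1 : A.map (Int.cast : ℤ → ℚ) *ᵥ (fun u => y u / D) = y - G *ᵥ (Bq *ᵥ y) := by
      have : (fun u => y u / D) = (D : ℚ)⁻¹ • y := by ext u; simp; ring
      rw [hA, this, Matrix.smul_mulVec, Matrix.mulVec_smul, smul_smul, mul_inv_cancel₀ hDq, one_smul,
        Matrix.sub_mulVec, Matrix.one_mulVec, Matrix.mulVec_mulVec]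
    have e2 : G *ᵥ (fun i => (k i : ℚ)) = G *ᵥ (fun i => (((k i % D).toNat : ℕ) : ℚ)) +
        H.map (Int.cast : ℤ → ℚ) *ᵥ (fun i => ((k i / D : ℤ) : ℚ)) := by
      rw [hkk, Matrix.mulVec_add, Matrix.mulVec_smul, hHm, Matrix.smul_mulVec]
    intro r
    have e3 := congrFun e1 r
    rw [hk', e2] at e3
    have e4 : (((H *ᵥ (fun i => k i / D)) r : ℤ) : ℚ) =
        (H.map (Int.cast : ℤ → ℚ) *ᵥ (fun i => ((k i / D : ℤ) : ℚ))) r := by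
      simp [Matrix.mulVec, dotProduct]
    have e5 : (A.map (Int.cast : ℤ → ℚ) *ᵥ (fun u => y u / D)) r = ∑ u, (A r u : ℚ) * (y u / D) := rfl
    rw [e4, ← e5, e3]
    simp only [Pi.sub_apply, Pi.add_apply]
    ring

end

/-- `e y = exp (2 π i y)`. -/
noncomputable def ee (y : ℝ) : ℂ := Complex.exp (Complex.I * ((2 * Real.pi * y : ℝ) : ℂ))

lemma ee_add (x y : ℝ) : ee (x + y) = ee x * ee y := by
  unfold ee; rw [← Complex.exp_add]; congr 1; push_cast; ring

lemma ee_nat_mul (n : ℕ) (y : ℝ) : ee (n * y) = ee y ^ n := by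
  unfold ee; rw [← Complex.exp_nat_mul]; congr 1; push_cast; ring

lemma ee_zero : ee 0 = 1 := by simp [ee]

lemma ee_ne_zero (y : ℝ) : ee y ≠ 0 := Complex.exp_ne_zero _

lemma ee_sum {ι : Type*} (s : Finset ι) (f : ι → ℝ) : ee (∑ i ∈ s, f i) = ∏ i ∈ s, ee (f i) := by
  classical
  induction s using Finset.induction_on with
  | empty => simp [ee_zero]
  | insert a s ha ih => rw [Finset.sum_insert ha, Finset.prod_insert ha, ee_add, ih]

lemma ee_eq_one {y : ℝ} : ee y = 1 ↔ ∃ n : ℤ, y = n := by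
  unfold ee
  rw [Complex.exp_eq_one_iff]
  have hpi : (Real.pi : ℂ) ≠ 0 := by exact_mod_cast Real.pi_ne_zero
  refine exists_congr fun n => ?_
  constructor
  · intro h
    have h2 : (2 * Real.pi * Complex.I) * ((y : ℂ) - n) = 0 := by
      push_cast at h
      linear_combination h
    have h3 : (y : ℂ) - n = 0 := (mul_eq_zero.1 h2).resolve_left (by simp)
    exact_mod_cast sub_eq_zero.1 h3
  · rintro rfl
    push_cast; ring

lemma ee_eq {x y : ℝ} : ee x = ee y ↔ ∃ n : ℤ, x - y = n := by
  rw [← ee_eq_one, sub_eq_add_neg, ee_add]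
  have : ee (-y) = (ee y)⁻¹ := by
    refine eq_inv_of_mul_eq_one_left ?_
    rw [← ee_add]; simp [ee_zero]
  rw [this, ← div_eq_mul_inv, div_eq_one_iff_eq (ee_ne_zero y)]

lemma ee_rat_root (q : ℚ) : ee q ^ q.den = 1 := by
  rw [← ee_nat_mul, ee_eq_one]
  refine ⟨q.num, ?_⟩
  have := Rat.den_mul_eq_num q
  exact_mod_cast this

/-- pairing -/
noncomputable def pr {m : ℕ} (α : Fin m →₀ ℕ) (y : Fin m → ℝ) : ℝ := ∑ r, (α r : ℝ) * y r

lemma eval_ee {m : ℕ} (P : MvPolynomial (Fin m) ℂ) (y : Fin m → ℝ) :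
    MvPolynomial.eval (fun r => ee (y r)) P = ∑ α ∈ P.support, P.coeff α * ee (pr α y) := by
  rw [MvPolynomial.eval_eq']
  refine Finset.sum_congr rfl fun α _ => ?_
  rw [pr, ee_sum]
  simp_rw [ee_nat_mul]

lemma pr_add {m : ℕ} (α : Fin m →₀ ℕ) (x y : Fin m → ℝ) : pr α (x + y) = pr α x + pr α y := by
  simp [pr, mul_add, Finset.sum_add_distrib]

/-- the transfer step -/
lemma transfer {ι : Type*} (T : Finset ι) (a v h : ι → ℂ) (M : ℕ)
    (hv : ∀ w, ∑ i ∈ T with v i ^ M = w, a i * v i = 0)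
    (hh : ∀ i ∈ T, ∀ j ∈ T, v i ^ M = v j ^ M → h i = h j) :
    ∑ i ∈ T, a i * (v i * h i) = 0 := by
  classical
  rw [← Finset.sum_fiberwise_of_maps_to (g := fun i => v i ^ M) (t := T.image fun i => v i ^ M)
    (fun i hi => Finset.mem_image_of_mem _ hi)]
  refine Finset.sum_eq_zero fun w hw => ?_
  obtain ⟨j, hj, rfl⟩ := Finset.mem_image.1 hw
  rw [← zero_mul (h j), ← hv (v j ^ M), Finset.sum_mul]
  refine Finset.sum_congr rfl fun i hi => ?_
  obtain ⟨hi, hij⟩ := Finset.mem_filter.1 hi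
  rw [hh i hi j hj hij]; ring

/-- the matrix attached to a finite relation -/
def relMat {m : ℕ} (M : ℕ) (R : Finset ((Fin m →₀ ℕ) × (Fin m →₀ ℕ))) : Matrix R (Fin m) ℤ :=
  fun r u => M * ((r.1.1 u : ℤ) - r.1.2 u)

lemma lemB_unif {ι : Type*} {s : ℕ} (T : Fin s → Finset ι) (a : Fin s → ι → ℂ) :
    ∃ M : ℕ, 0 < M ∧ ∀ t, ∀ ζ : ι → ℂ, (∃ n : ℕ, 0 < n ∧ ∀ i ∈ T t, ζ i ^ n = 1) →
      ∑ i ∈ T t, a t i * ζ i = 0 → ∀ w, ∑ i ∈ T t with ζ i ^ M = w, a t i * ζ i = 0 := by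
  classical
  choose M hM hB using fun t => lemB (T t) (a t)
  refine ⟨∏ t, M t, Finset.prod_pos fun t _ => hM t, ?_⟩
  intro t ζ hζ h w
  obtain ⟨c, hc⟩ := Finset.dvd_prod_of_mem M (Finset.mem_univ t)
  have hcls := hB t (T t) subset_rfl ζ hζ h
  rw [hc]
  have := transfer (T t) (a t) ζ (fun i => if ζ i ^ (M t * c) = w then 1 else 0) (M t) hcls (by
    intro i _ j _ hij
    simp only [pow_mul, hij])
  rw [Finset.sum_filter]
  refine Eq.trans ?_ this
  refine Finset.sum_congr rfl fun i _ => ?_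
  split_ifs <;> simp

/-- Main statement in normalised coordinates. -/
lemma main_norm (m s : ℕ) (P : Fin s → MvPolynomial (Fin m) ℂ) :
    ∃ S : Finset (Matrix (Fin m) (Fin m) ℤ × (Fin m → ℚ)),
      (∀ Ag ∈ S, ∀ (z : Fin m → ℝ) (t : Fin s),
        MvPolynomial.eval (fun r => ee ((∑ u, (Ag.1 r u : ℝ) * z u) + Ag.2 r)) (P t) = 0) ∧
      ∀ y : Fin m → ℚ, (∀ t, MvPolynomial.eval (fun r => ee (y r)) (P t) = 0) →
        ∃ Ag ∈ S, ∃ (z : Fin m → ℚ) (c : Fin m → ℤ),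
          ∀ r, y r = (∑ u, (Ag.1 r u : ℚ) * z u) + Ag.2 r + c r := by
  classical
  obtain ⟨M, hM, hB⟩ := lemB_unif (fun t => (P t).support) (fun t α => (P t).coeff α)
  choose A S hBA hS using
    fun R : Finset ((Fin m →₀ ℕ) × (Fin m →₀ ℕ)) => lemD (relMat M R)
  let E : Finset (Fin m →₀ ℕ) := Finset.univ.biUnion fun t => (P t).support
  let C : Finset (Matrix (Fin m) (Fin m) ℤ × (Fin m → ℚ)) :=
    (E ×ˢ E).powerset.biUnion fun R => (S R).image fun g => (A R, g)
  refine ⟨C.filter fun Ag => ∀ (z : Fin m → ℝ) (t : Fin s),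
        MvPolynomial.eval (fun r => ee ((∑ u, (Ag.1 r u : ℝ) * z u) + Ag.2 r)) (P t) = 0,
    fun Ag h => (Finset.mem_filter.1 h).2, ?_⟩
  intro y hy
  let yr : Fin m → ℝ := fun r => y r
  let R := (E ×ˢ E).filter fun ab => ee (pr ab.1 yr) ^ M = ee (pr ab.2 yr) ^ M
  have hint : ∀ i : R, ∃ k : ℤ, ∑ u, (relMat M R i u : ℚ) * y u = k := by
    rintro ⟨⟨α, β⟩, hi⟩
    have h1 := (Finset.mem_filter.1 hi).2
    simp only at h1
    rw [← ee_nat_mul, ← ee_nat_mul, ee_eq] at h1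
    obtain ⟨k, hk⟩ := h1
    refine ⟨k, ?_⟩
    have h2 : (((∑ u, (relMat M R ⟨(α, β), hi⟩ u : ℚ) * y u : ℚ)) : ℝ) = (k : ℝ) := by
      rw [← hk]
      simp only [pr, relMat, yr]
      push_cast
      rw [Finset.mul_sum, Finset.mul_sum, ← Finset.sum_sub_distrib]
      exact Finset.sum_congr rfl fun u _ => by ring
    exact_mod_cast h2
  choose k hk using hint
  obtain ⟨g, hg, z, c, hyz⟩ := hS R y k hk
  refine ⟨(A R, g), Finset.mem_filter.2 ⟨Finset.mem_biUnion.2 ⟨R, Finset.mem_powerset.2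
    (Finset.filter_subset _ _), Finset.mem_image_of_mem _ hg⟩, ?_⟩, z, c, hyz⟩
  intro z' t
  simp only
  -- displacement
  let δ : Fin m → ℝ := fun r => ∑ u, (A R r u : ℝ) * (z' u - z u)
  have hpt : ∀ r, ee ((∑ u, (A R r u : ℝ) * z' u) + g r) = ee ((yr + δ) r) := by
    intro r
    rw [ee_eq]
    refine ⟨- c r, ?_⟩
    have h1 : (y r : ℝ) = (∑ u, (A R r u : ℝ) * z u) + g r + c r := by
      exact_mod_cast hyz r
    simp only [Pi.add_apply, yr, δ, h1, mul_sub, Finset.sum_sub_distrib]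
    push_cast
    ring
  simp_rw [hpt]
  rw [eval_ee]
  simp_rw [pr_add, ee_add]
  refine transfer _ _ (fun α => ee (pr α yr)) (fun α => ee (pr α δ)) M ?_ ?_
  · refine hB t (fun α => ee (pr α yr)) ?_ ?_
    · refine ⟨∏ r, (y r).den, Finset.prod_pos fun r _ => (y r).den_pos, ?_⟩
      intro α _
      simp only [pr, ee_sum, ee_nat_mul]
      rw [← Finset.prod_pow]
      refine Finset.prod_eq_one fun r _ => ?_
      obtain ⟨d, hd⟩ := Finset.dvd_prod_of_mem (fun r => (y r).den) (Finset.mem_univ r)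
      rw [hd, ← pow_mul, mul_comm, mul_assoc, pow_mul, ee_rat_root, one_pow]
    · rw [← eval_ee]; exact hy t
  · intro α hα β hβ hab
    have hmem : (α, β) ∈ R := Finset.mem_filter.2 ⟨Finset.mem_product.2
      ⟨Finset.mem_biUnion.2 ⟨t, Finset.mem_univ _, hα⟩,
       Finset.mem_biUnion.2 ⟨t, Finset.mem_univ _, hβ⟩⟩, hab⟩
    have hz : ∀ u, ∑ r, ((α r : ℝ) - β r) * (A R r u : ℝ) = 0 := by
      intro u
      have h0 := congrFun (congrFun (hBA R) ⟨(α, β), hmem⟩) u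
      rw [Matrix.mul_apply] at h0
      simp only [relMat, Matrix.zero_apply, mul_assoc] at h0
      rw [← Finset.mul_sum] at h0
      have h1 := (mul_eq_zero.1 h0).resolve_left (by exact_mod_cast hM.ne')
      exact_mod_cast h1
    have hd : pr α δ - pr β δ = 0 := by
      simp only [pr, δ]
      rw [← Finset.sum_sub_distrib]
      calc _ = ∑ r, ∑ u, (((α r : ℝ) - β r) * (A R r u : ℝ)) * (z' u - z u) := by
              refine Finset.sum_congr rfl fun r _ => ?_
              rw [← sub_mul, Finset.mul_sum]
              exact Finset.sum_congr rfl fun u _ => by ring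
        _ = 0 := by
              rw [Finset.sum_comm]
              refine Finset.sum_eq_zero fun u _ => ?_
              rw [← Finset.sum_mul, hz, zero_mul]
    simp only [sub_eq_zero.1 hd]

end LaurentTorus

theorem laurent_torus (m s : ℕ) (hm : 1 ≤ m)
    (P : Fin s → MvPolynomial (Fin m) ℂ) :
    ∃ (J : ℕ) (A : Fin J → Matrix (Fin m) (Fin m) ℤ) (ℓ : Fin J → (Fin m → ℝ)),
      (∀ (j : Fin J) (r : Fin m), ∃ q : ℚ, ℓ j r = (q : ℝ) * Real.pi) ∧
      (∀ (j : Fin J) (z : Fin m → ℝ) (t : Fin s),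
        MvPolynomial.eval
          (fun r => Complex.exp
            (Complex.I * ((((∑ u : Fin m, (A j r u : ℝ) * z u) + ℓ j r : ℝ)) : ℂ))) (P t) = 0) ∧
      (∀ x : Fin m → ℝ, (∀ r : Fin m, ∃ q : ℚ, x r = (q : ℝ) * Real.pi) →
        (∀ t : Fin s,
          MvPolynomial.eval (fun r => Complex.exp (Complex.I * ((x r : ℝ) : ℂ))) (P t) = 0) →
        ∃ (j : Fin J) (z : Fin m → ℝ),
          (∀ r : Fin m, ∃ q : ℚ, z r = (q : ℝ) * Real.pi) ∧
          ∀ r : Fin m, ∃ c : ℤ,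
            x r - ((∑ u : Fin m, (A j r u : ℝ) * z u) + ℓ j r) = 2 * Real.pi * c) := by
  obtain ⟨S, h1, h2⟩ := LaurentTorus.main_norm m s P
  have hpi := Real.pi_ne_zero
  refine ⟨S.card, fun j => (S.equivFin.symm j).1.1,
    fun j r => 2 * Real.pi * ((S.equivFin.symm j).1.2 r : ℝ), ?_, ?_, ?_⟩
  · intro j r
    exact ⟨2 * (S.equivFin.symm j).1.2 r, by push_cast; ring⟩
  · intro j z t
    have := h1 _ (S.equivFin.symm j).2 (fun u => z u / (2 * Real.pi)) t
    rw [← this]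
    congr 2
    ext r
    unfold LaurentTorus.ee
    congr 3
    rw [mul_add, Finset.mul_sum]
    congr 1
    refine Finset.sum_congr rfl fun u _ => ?_
    field_simp
  · intro x hx hP
    choose q hq using hx
    obtain ⟨Ag, hAg, z, c, hz⟩ := h2 (fun r => q r / 2) (by
      intro t
      rw [← hP t]
      congr 2
      ext r
      unfold LaurentTorus.ee
      congr 3
      rw [hq r]; push_cast; ring)
    refine ⟨S.equivFin ⟨Ag, hAg⟩, fun u => 2 * Real.pi * z u,
      fun r => ⟨2 * z r, by push_cast; ring⟩, fun r => ⟨c r, ?_⟩⟩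
    have hzr : (q r : ℝ) / 2 = (∑ u, (Ag.1 r u : ℝ) * z u) + Ag.2 r + c r := by
      exact_mod_cast hz r
    simp only [Equiv.symm_apply_apply]
    have h3 : ∑ u, (Ag.1 r u : ℝ) * (2 * Real.pi * z u) = 2 * Real.pi * ∑ u, (Ag.1 r u : ℝ) * z u := by
      rw [Finset.mul_sum]; exact Finset.sum_congr rfl fun u _ => by ring
    rw [h3, hq r]
    linear_combination (2 * Real.pi) * hzr
end
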